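/- arXiv:2209.04523 — 8 statements merged into one kernel-verified Lean document; each statement's English description precedes it below -/
import Mathlib

section
/- Tilting lemma for Onsager–Machlup ratios: Let B be a Banach space, μ₀ a Borel probability measure on B, and Φ : B → ℝ a continuous function with 0 < ∫_B e^{−Φ} dμ₀ < ∞. Define the Borel probability measure μ by μ(A) = (∫_B e^{−Φ} dμ₀)^{−1} ∫_A e^{−Φ} dμ₀. Let z₁, z₂ ∈ B be such that μ₀(B_ε(z₂)) > 0 for all sufficiently small ε > 0 and the limit L := lim_{ε→0⁺} μ₀(B_ε(z₁))/μ₀(B_ε(z₂)) exists in [0, ∞). Then lim_{ε→0⁺} μ(B_ε(z₁))/μ(B_ε(z₂)) = exp(Φ(z₂) − Φ(z₁)) · L. -/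
open MeasureTheory Filter Metric Set Topology

/-- The integral over small balls factors as the mass of the ball times a function converging
to the value at the centre. -/
theorem exists_ball_average {B : Type*} [NormedAddCommGroup B] [MeasurableSpace B] [BorelSpace B]
    (μ : Measure B) [IsProbabilityMeasure μ] (f : B → ℝ) (hf : Continuous f)
    (hi : Integrable f μ) (z : B) :
    ∃ g : ℝ → ℝ, Tendsto g (𝓝[>] (0 : ℝ)) (𝓝 (f z)) ∧
      ∀ ε, ∫ x in ball z ε, f x ∂μ = g ε * (μ (ball z ε)).toReal := by
  classical
  refine ⟨fun ε => if (μ (ball z ε)).toReal = 0 then f z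
    else (∫ x in ball z ε, f x ∂μ) / (μ (ball z ε)).toReal, ?_, ?_⟩
  · rw [Metric.tendsto_nhds]
    intro δ hδ
    obtain ⟨r, hr, hr'⟩ := Metric.continuous_iff.1 hf z (δ / 2) (by positivity)
    filter_upwards [Ioo_mem_nhdsGT hr] with ε hε
    split_ifs with h
    · simpa using hδ
    · have hm : 0 < (μ (ball z ε)).toReal := lt_of_le_of_ne ENNReal.toReal_nonneg (Ne.symm h)
      have h1 : ‖∫ x in ball z ε, (f x - f z) ∂μ‖ ≤ δ / 2 * μ.real (ball z ε) := by
        apply norm_setIntegral_le_of_norm_le_const (measure_lt_top _ _)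
        intro x hx
        have := hr' x (lt_trans (mem_ball.1 hx) hε.2)
        rw [Real.dist_eq] at this
        exact this.le
      rw [integral_sub hi.integrableOn (integrable_const _), setIntegral_const, smul_eq_mul] at h1
      have h2 : (∫ x in ball z ε, f x ∂μ) / (μ (ball z ε)).toReal - f z
          = ((∫ x in ball z ε, f x ∂μ) - μ.real (ball z ε) * f z) / (μ (ball z ε)).toReal := by
        rw [Measure.real]
        field_simp
      rw [Real.dist_eq, h2, abs_div, abs_of_pos hm, div_lt_iff₀ hm]
      rw [Real.norm_eq_abs] at h1
      refine h1.trans_lt ?_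
      rw [Measure.real]
      nlinarith
  · intro ε
    dsimp only
    split_ifs with h
    · rw [h, mul_zero]
      apply setIntegral_measure_zero
      exact ((ENNReal.toReal_eq_zero_iff _).1 h).resolve_right (measure_ne_top _ _)
    · field_simp

/-- **Tilting lemma for Onsager–Machlup ratios.**
If `μ` is obtained from the Borel probability measure `μ₀` on a Banach space `B` by tilting
with the density `e^{-Φ}` (normalized), `Φ` continuous, then the small-ball ratio limits of
`μ` are those of `μ₀` multiplied by `exp (Φ z₂ - Φ z₁)`. -/
theorem onsager_machlup_tilting
    {B : Type*} [NormedAddCommGroup B] [NormedSpace ℝ B] [CompleteSpace B]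
    [MeasurableSpace B] [BorelSpace B]
    (μ₀ μ : Measure B) [IsProbabilityMeasure μ₀] [IsProbabilityMeasure μ]
    (Φ : B → ℝ) (hΦ : Continuous Φ)
    (hInt : Integrable (fun x => Real.exp (-Φ x)) μ₀)
    (hpos : 0 < ∫ x, Real.exp (-Φ x) ∂μ₀)
    (hμ : ∀ A : Set B, MeasurableSet A →
      μ A = ENNReal.ofReal ((∫ x in A, Real.exp (-Φ x) ∂μ₀) / ∫ x, Real.exp (-Φ x) ∂μ₀))
    (z₁ z₂ : B)
    (hball : ∀ᶠ ε in 𝓝[>] (0 : ℝ), 0 < μ₀ (ball z₂ ε))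
    (L : ℝ) (hL : 0 ≤ L)
    (hlim : Tendsto (fun ε : ℝ => (μ₀ (ball z₁ ε)).toReal / (μ₀ (ball z₂ ε)).toReal)
      (𝓝[>] (0 : ℝ)) (𝓝 L)) :
    Tendsto (fun ε : ℝ => (μ (ball z₁ ε)).toReal / (μ (ball z₂ ε)).toReal)
      (𝓝[>] (0 : ℝ)) (𝓝 (Real.exp (Φ z₂ - Φ z₁) * L)) := by
  have hc : Continuous (fun x => Real.exp (-Φ x)) := by fun_prop
  obtain ⟨g₁, hg₁, h₁⟩ := exists_ball_average μ₀ _ hc hInt z₁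
  obtain ⟨g₂, hg₂, h₂⟩ := exists_ball_average μ₀ _ hc hInt z₂
  have key : ∀ A : Set B, MeasurableSet A → (μ A).toReal =
      (∫ x in A, Real.exp (-Φ x) ∂μ₀) / ∫ x, Real.exp (-Φ x) ∂μ₀ := by
    intro A hA
    rw [hμ A hA, ENNReal.toReal_ofReal]
    exact div_nonneg (integral_nonneg fun x => (Real.exp_pos _).le) hpos.le
  have hT := (hg₁.div hg₂ (Real.exp_pos _).ne').mul hlim
  have he : Real.exp (Φ z₂ - Φ z₁) = Real.exp (-Φ z₁) / Real.exp (-Φ z₂) := by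
    rw [← Real.exp_sub]
    congr 1
    ring
  rw [he]
  refine hT.congr fun ε => ?_
  rw [key _ measurableSet_ball, key _ measurableSet_ball, h₁, h₂,
    div_div_div_cancel_right₀ hpos.ne', Pi.div_apply, div_mul_div_comm]
end

section
/- Onsager–Machlup function for a measure equivalent to a Gaussian (finite-dimensional case): Let γ be the standard Gaussian measure on E = EuclideanSpace ℝ (Fin d) (density (2π)^{−d/2} exp(−‖x‖²/2) with respect to Lebesgue measure). Let Φ : E → ℝ be locally Lipschitz (hence continuous and locally bounded) with 0 < ∫_E e^{−Φ} dγ < ∞, and define the probability measure μ by μ(A) = (∫_E e^{−Φ} dγ)^{−1} ∫_A e^{−Φ} dγ. Then for all z₁, z₂ ∈ E, lim_{ε→0⁺} μ(B_ε(z₁))/μ(B_ε(z₂)) = exp( (Φ(z₂) + ‖z₂‖²/2) − (Φ(z₁) + ‖z₁‖²/2) ). -/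
open MeasureTheory Filter Metric Set Topology Real

theorem om_avg {d : ℕ} (g : EuclideanSpace ℝ (Fin d) → ℝ) (hg : Continuous g)
    (z : EuclideanSpace ℝ (Fin d)) :
    Tendsto (fun ε : ℝ => (∫ x in ball z ε, g x) /
      (volume : Measure (EuclideanSpace ℝ (Fin d))).real (ball 0 ε)) (𝓝[>] (0 : ℝ)) (𝓝 (g z)) := by
  have hs : Tendsto (fun ε : ℝ => ball z ε) (𝓝[>] (0 : ℝ)) (𝓝 z).smallSets := by
    rw [Filter.tendsto_smallSets_iff]
    intro t ht
    obtain ⟨r, hr, hrt⟩ := Metric.mem_nhds_iff.1 ht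
    filter_upwards [Ioo_mem_nhdsGT hr] with ε hε
    exact (ball_subset_ball hε.2.le).trans hrt
  have h := ContinuousAt.integral_sub_linear_isLittleO_ae (μ := volume) hg.continuousAt
    (hg.stronglyMeasurable.stronglyMeasurableAtFilter) hs
  have h2 := (h.tendsto_div_nhds_zero).add_const (g z)
  rw [zero_add] at h2
  refine h2.congr' ?_
  filter_upwards [self_mem_nhdsWithin] with ε hε
  have e : (volume : Measure (EuclideanSpace ℝ (Fin d))).real (ball z ε)
      = (volume : Measure (EuclideanSpace ℝ (Fin d))).real (ball 0 ε) := by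
    exact Measure.addHaar_real_ball_center _ _ _
  have p : 0 < (volume : Measure (EuclideanSpace ℝ (Fin d))).real (ball 0 ε) :=
    ENNReal.toReal_pos (measure_ball_pos _ _ hε).ne' measure_ball_lt_top.ne
  rw [e, smul_eq_mul]
  field_simp
  ring

/-- **Onsager–Machlup function for a measure equivalent to a Gaussian (finite dimensions).**
If `μ` is obtained from the standard Gaussian `γ` on `ℝ^d` by tilting with `e^{-Φ}` for a
locally Lipschitz `Φ`, then the Onsager–Machlup function of `μ` is `z ↦ Φ z + ‖z‖²/2`. -/
theorem onsager_machlup_equivalent_gaussian (d : ℕ)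
    (γ : Measure (EuclideanSpace ℝ (Fin d)))
    (hγ : γ = volume.withDensity
      (fun x => ENNReal.ofReal ((2 * π) ^ (-(d : ℝ) / 2) * Real.exp (-‖x‖ ^ 2 / 2))))
    (Φ : EuclideanSpace ℝ (Fin d) → ℝ) (hΦ : LocallyLipschitz Φ)
    (hInt : Integrable (fun x => Real.exp (-Φ x)) γ)
    (hpos : 0 < ∫ x, Real.exp (-Φ x) ∂γ)
    (μ : Measure (EuclideanSpace ℝ (Fin d))) [IsProbabilityMeasure μ]
    (hμ : ∀ A : Set (EuclideanSpace ℝ (Fin d)), MeasurableSet A →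
      μ A = ENNReal.ofReal ((∫ x in A, Real.exp (-Φ x) ∂γ) / ∫ x, Real.exp (-Φ x) ∂γ))
    (z₁ z₂ : EuclideanSpace ℝ (Fin d)) :
    Tendsto (fun ε : ℝ => (μ (ball z₁ ε)).toReal / (μ (ball z₂ ε)).toReal)
      (𝓝[>] (0 : ℝ))
      (𝓝 (Real.exp ((Φ z₂ + ‖z₂‖ ^ 2 / 2) - (Φ z₁ + ‖z₁‖ ^ 2 / 2)))) := by
  have hc : (0 : ℝ) < (2 * π) ^ (-(d : ℝ) / 2) := by positivity
  set c : ℝ := (2 * π) ^ (-(d : ℝ) / 2) with hcdef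
  have hΦc := hΦ.continuous
  let g : EuclideanSpace ℝ (Fin d) → ℝ := fun x => (c * Real.exp (-‖x‖ ^ 2 / 2)) * Real.exp (-Φ x)
  have hg : Continuous g := by fun_prop
  have key : ∀ z ε, (μ (ball z ε)).toReal =
      (∫ x in ball z ε, g x) / ∫ x, Real.exp (-Φ x) ∂γ := by
    intro z ε
    rw [hμ _ measurableSet_ball, ENNReal.toReal_ofReal
      (div_nonneg (integral_nonneg fun x => (Real.exp_pos _).le) hpos.le)]
    congr 1
    rw [hγ, setIntegral_withDensity_eq_setIntegral_toReal_smul (by fun_prop)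
      (Eventually.of_forall fun x => ENNReal.ofReal_lt_top) _ measurableSet_ball]
    refine integral_congr_ae (Eventually.of_forall fun x => ?_)
    simp only [smul_eq_mul, g]
    rw [ENNReal.toReal_ofReal (by positivity)]
  have gpos : ∀ z, 0 < g z := fun z => by positivity
  have h := (om_avg g hg z₁).div (om_avg g hg z₂) (gpos z₂).ne'
  have hval : g z₁ / g z₂ =
      Real.exp ((Φ z₂ + ‖z₂‖ ^ 2 / 2) - (Φ z₁ + ‖z₁‖ ^ 2 / 2)) := by
    rw [div_eq_iff (gpos z₂).ne']
    simp only [g]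
    rw [mul_assoc, mul_assoc, ← Real.exp_add, ← Real.exp_add, mul_left_comm, ← Real.exp_add]
    congr 2
    ring
  rw [hval] at h
  refine h.congr' ?_
  filter_upwards [self_mem_nhdsWithin] with ε hε
  have p : 0 < (volume : Measure (EuclideanSpace ℝ (Fin d))).real (ball 0 ε) :=
    ENNReal.toReal_pos (measure_ball_pos _ _ hε).ne' measure_ball_lt_top.ne
  rw [key, key, Pi.div_apply, div_div_div_cancel_right₀ p.ne', div_div_div_cancel_right₀ hpos.ne']
end

section
/- Small-noise Laplace principle for one-dimensional Gaussians (motivating example): Let A ⊆ ℝ be a Borel set with positive Lebesgue measure. Then lim_{ε→0⁺} ε² log( (gaussianReal 0 ε²)(A) ) = − essInf_{x∈A} (x²/2), where the essential infimum is taken with respect to Lebesgue measure restricted to A (i.e., essInf of the function x ↦ x²/2 under the measure volume.restrict A). -/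
open MeasureTheory Filter Set Topology ProbabilityTheory NNReal

lemma aux_pdf (v : ℝ≥0) (hv : 0 < v) (x : ℝ) :
    gaussianPDFReal 0 v x =
      ((√(v : ℝ))⁻¹ * Real.exp (-((1 - (v : ℝ)) / v * (x ^ 2 / 2)))) * gaussianPDFReal 0 1 x := by
  have hv' : (0 : ℝ) < v := hv
  unfold gaussianPDFReal
  have h1 : √(2 * Real.pi * (v : ℝ)) = √(2 * Real.pi) * √(v : ℝ) :=
    Real.sqrt_mul (by positivity) _
  have h2 : Real.exp (-(x - 0) ^ 2 / (2 * (v : ℝ))) =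
      Real.exp (-((1 - (v : ℝ)) / v * (x ^ 2 / 2))) * Real.exp (-(x - 0) ^ 2 / (2 * ((1 : ℝ≥0) : ℝ))) := by
    rw [← Real.exp_add]
    congr 1
    push_cast
    field_simp
    ring
  rw [h1, h2, mul_inv]
  push_cast
  rw [mul_one]
  ring

lemma aux_apply (v : ℝ≥0) (hv : v ≠ 0) (s : Set ℝ) :
    ((gaussianReal 0 v) s).toReal = ∫ x in s, gaussianPDFReal 0 v x := by
  rw [gaussianReal_apply_eq_integral 0 hv, ENNReal.toReal_ofReal]
  exact integral_nonneg fun x => gaussianPDFReal_nonneg _ _ _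

lemma aux_upper (v : ℝ≥0) (hv : 0 < v) (hv1 : v ≤ 1) (A : Set ℝ) (m : ℝ)
    (hm : ∀ᵐ x ∂(volume.restrict A), m ≤ x ^ 2 / 2) :
    ((gaussianReal 0 v) A).toReal ≤ (√(v : ℝ))⁻¹ * Real.exp (-((1 - (v : ℝ)) / v * m)) := by
  have hv' : (0 : ℝ) < v := hv
  have hv1' : (v : ℝ) ≤ 1 := hv1
  have hc : 0 ≤ (1 - (v : ℝ)) / v := div_nonneg (by linarith) hv'.le
  rw [aux_apply v hv.ne']
  calc ∫ x in A, gaussianPDFReal 0 v x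
      ≤ ∫ x in A, ((√(v : ℝ))⁻¹ * Real.exp (-((1 - (v : ℝ)) / v * m))) * gaussianPDFReal 0 1 x := by
        apply integral_mono_ae (integrable_gaussianPDFReal 0 v).integrableOn
          ((integrable_gaussianPDFReal 0 1).integrableOn.const_mul _)
        filter_upwards [hm] with x hx
        rw [aux_pdf v hv x]
        have := gaussianPDFReal_nonneg 0 1 x
        gcongr
    _ = ((√(v : ℝ))⁻¹ * Real.exp (-((1 - (v : ℝ)) / v * m))) * ((gaussianReal 0 1) A).toReal := by
        rw [integral_const_mul, aux_apply 1 one_ne_zero]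
    _ ≤ _ := by
        apply mul_le_of_le_one_right (by positivity)
        exact measureReal_le_one

lemma aux_lower (v : ℝ≥0) (hv : 0 < v) (hv1 : v ≤ 1) (A : Set ℝ) (hA : MeasurableSet A) (c : ℝ) :
    ((√(v : ℝ))⁻¹ * Real.exp (-((1 - (v : ℝ)) / v * c))) *
      ((gaussianReal 0 1) (A ∩ {x | x ^ 2 / 2 < c})).toReal ≤ ((gaussianReal 0 v) A).toReal := by
  have hv' : (0 : ℝ) < v := hv
  have hv1' : (v : ℝ) ≤ 1 := hv1
  have hc : 0 ≤ (1 - (v : ℝ)) / v := div_nonneg (by linarith) hv'.le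
  have hB : MeasurableSet (A ∩ {x : ℝ | x ^ 2 / 2 < c}) :=
    hA.inter (measurableSet_lt (by fun_prop) (by fun_prop))
  calc _ ≤ ((gaussianReal 0 v) (A ∩ {x | x ^ 2 / 2 < c})).toReal := by
        rw [aux_apply v hv.ne', aux_apply 1 one_ne_zero, ← integral_const_mul]
        apply setIntegral_mono_on ((integrable_gaussianPDFReal 0 1).integrableOn.const_mul _)
          (integrable_gaussianPDFReal 0 v).integrableOn hB
        intro x hx
        rw [aux_pdf v hv x]
        have := gaussianPDFReal_nonneg 0 1 x
        have h2 : x ^ 2 / 2 ≤ c := le_of_lt hx.2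
        gcongr
    _ ≤ _ := ENNReal.toReal_mono (measure_ne_top _ _) (measure_mono inter_subset_left)

lemma aux_log (v p c : ℝ) (hv : 0 < v) (hp : 0 < p) :
    v * Real.log (((√v)⁻¹ * Real.exp (-((1 - v) / v * c))) * p) =
      -(v * Real.log v) / 2 - (1 - v) * c + v * Real.log p := by
  have hs : 0 < √v := Real.sqrt_pos.2 hv
  rw [Real.log_mul (by positivity) hp.ne', Real.log_mul (by positivity) (by positivity),
    Real.log_exp, Real.log_inv, Real.log_sqrt hv.le]
  field_simp
  ring

lemma aux_tendsto (p c : ℝ) :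
    Tendsto (fun ε : ℝ≥0 => -((ε : ℝ) ^ 2 * Real.log ((ε : ℝ) ^ 2)) / 2 - (1 - (ε : ℝ) ^ 2) * c
      + (ε : ℝ) ^ 2 * Real.log p) (𝓝[>] (0 : ℝ≥0)) (𝓝 (-c)) := by
  have h : Continuous (fun ε : ℝ≥0 => -((ε : ℝ) ^ 2 * Real.log ((ε : ℝ) ^ 2)) / 2
      - (1 - (ε : ℝ) ^ 2) * c + (ε : ℝ) ^ 2 * Real.log p) := by
    have h0 : Continuous (fun ε : ℝ≥0 => (ε : ℝ) ^ 2 * Real.log ((ε : ℝ) ^ 2)) :=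
      Real.continuous_mul_log.comp (by fun_prop : Continuous fun ε : ℝ≥0 => (ε : ℝ) ^ 2)
    fun_prop
  have := (h.tendsto 0).mono_left (nhdsWithin_le_nhds (s := Ioi 0))
  simpa using this

/-- **Small-noise Laplace principle for one-dimensional Gaussians.**
For a Borel set `A ⊆ ℝ` of positive Lebesgue measure,
`ε² log (gaussianReal 0 ε²) A → − essinf_{x ∈ A} x²/2` as `ε → 0⁺`. -/
theorem small_noise_laplace_principle_gaussianReal
    (A : Set ℝ) (hA : MeasurableSet A) (hpos : 0 < volume A) :
    Tendsto
      (fun ε : ℝ≥0 => (ε : ℝ) ^ 2 * Real.log ((gaussianReal 0 (ε ^ 2)) A).toReal)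
      (𝓝[>] (0 : ℝ≥0))
      (𝓝 (-essInf (fun x : ℝ => x ^ 2 / 2) (volume.restrict A))) := by
  set m := essInf (fun x : ℝ => x ^ 2 / 2) (volume.restrict A) with hmdef
  have hne : (ae (volume.restrict A)).NeBot := by
    rw [ae_neBot]
    intro h
    rw [Measure.restrict_eq_zero] at h
    exact hpos.ne' h
  have hbdd : IsBoundedUnder (· ≥ ·) (ae (volume.restrict A)) (fun x : ℝ => x ^ 2 / 2) :=
    isBoundedUnder_of ⟨0, fun x => by positivity⟩
  have hcob : IsCoboundedUnder (· ≥ ·) (ae (volume.restrict A)) (fun x : ℝ => x ^ 2 / 2) := by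
    by_contra hcon
    have h1 : ∀ n : ℕ, ∀ᵐ x ∂(volume.restrict A), (n : ℝ) ≤ x ^ 2 / 2 := by
      intro n
      by_contra hn
      apply hcon
      refine ⟨n, fun a ha => ?_⟩
      by_contra hlt
      apply hn
      have ha' : ∀ᵐ x ∂(volume.restrict A), a ≤ x ^ 2 / 2 := ha
      filter_upwards [ha'] with x hx
      exact (le_of_lt (not_le.1 hlt)).trans hx
    obtain ⟨x, hx⟩ := (ae_all_iff.2 h1).exists
    obtain ⟨n, hn⟩ := exists_nat_gt (x ^ 2 / 2)
    exact absurd (hx n) (not_le.2 hn)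
  have hm : ∀ᵐ x ∂(volume.restrict A), m ≤ x ^ 2 / 2 := ae_essInf_le hbdd
  have hp : ∀ c, m < c → 0 < ((gaussianReal 0 1) (A ∩ {x | x ^ 2 / 2 < c})).toReal := by
    intro c hc
    refine ENNReal.toReal_pos (fun h => ?_) (measure_ne_top _ _)
    have h2 := gaussianReal_absolutelyContinuous' 0 one_ne_zero h
    have h3 : ∀ᵐ x ∂(volume.restrict A), c ≤ x ^ 2 / 2 := by
      rw [ae_restrict_iff' hA, ae_iff]
      convert h2 using 2
      ext x
      simp
    exact absurd (le_essInf_of_ae_le c h3 hcob) (not_le.2 hc)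
  have hev : ∀ᶠ ε : ℝ≥0 in 𝓝[>] (0 : ℝ≥0), 0 < ε ^ 2 ∧ ε ^ 2 ≤ 1 := by
    filter_upwards [self_mem_nhdsWithin,
      nhdsWithin_le_nhds (Iio_mem_nhds (zero_lt_one : (0 : ℝ≥0) < 1))] with ε h1 h2
    exact ⟨pow_pos h1 2, pow_le_one₀ (zero_le) (le_of_lt h2)⟩
  have low : ∀ c, m < c → ∀ᶠ ε : ℝ≥0 in 𝓝[>] (0 : ℝ≥0),
      -((ε : ℝ) ^ 2 * Real.log ((ε : ℝ) ^ 2)) / 2 - (1 - (ε : ℝ) ^ 2) * c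
      + (ε : ℝ) ^ 2 * Real.log ((gaussianReal 0 1) (A ∩ {x | x ^ 2 / 2 < c})).toReal
      ≤ (ε : ℝ) ^ 2 * Real.log ((gaussianReal 0 (ε ^ 2)) A).toReal := by
    intro c hc
    filter_upwards [hev] with ε hε
    have hv : (0 : ℝ) < (ε : ℝ) ^ 2 := by exact_mod_cast hε.1
    have := hp c hc
    have hs : 0 < √((ε : ℝ) ^ 2) := Real.sqrt_pos.2 hv
    have hl := aux_lower (ε ^ 2) hε.1 hε.2 A hA c
    push_cast at hl
    rw [← aux_log _ _ _ hv this]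
    exact mul_le_mul_of_nonneg_left (Real.log_le_log (by positivity) hl) hv.le
  have up : ∀ᶠ ε : ℝ≥0 in 𝓝[>] (0 : ℝ≥0),
      (ε : ℝ) ^ 2 * Real.log ((gaussianReal 0 (ε ^ 2)) A).toReal ≤
      -((ε : ℝ) ^ 2 * Real.log ((ε : ℝ) ^ 2)) / 2 - (1 - (ε : ℝ) ^ 2) * m
      + (ε : ℝ) ^ 2 * Real.log 1 := by
    filter_upwards [hev] with ε hε
    have hv : (0 : ℝ) < (ε : ℝ) ^ 2 := by exact_mod_cast hε.1
    have hs : 0 < √((ε : ℝ) ^ 2) := Real.sqrt_pos.2 hv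
    have hu := aux_upper (ε ^ 2) hε.1 hε.2 A m hm
    push_cast at hu
    rw [← aux_log _ _ _ hv one_pos, mul_one]
    have hpA : 0 < ((gaussianReal 0 (ε ^ 2)) A).toReal := by
      refine ENNReal.toReal_pos (fun h => ?_) (measure_ne_top _ _)
      exact hpos.ne' (gaussianReal_absolutelyContinuous' 0 hε.1.ne' h)
    exact mul_le_mul_of_nonneg_left (Real.log_le_log hpA hu) hv.le
  rw [tendsto_order]
  constructor
  · intro a ha
    obtain ⟨b, hab, hbm⟩ := exists_between ha
    have hb : m < -b := by linarith
    have ht := aux_tendsto ((gaussianReal 0 1) (A ∩ {x | x ^ 2 / 2 < -b})).toReal (-b)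
    rw [neg_neg] at ht
    filter_upwards [low (-b) hb, ht.eventually_const_lt hab] with ε h1 h2
    exact h2.trans_le h1
  · intro a ha
    filter_upwards [up, (aux_tendsto 1 m).eventually_lt_const ha] with ε h1 h2
    exact h1.trans_lt h2
end

section
/- Finite-dimensional Schilder theorem (small-noise LDP for the Gaussian measure): Let γ be the standard Gaussian measure on E = EuclideanSpace ℝ (Fin d) and for ε > 0 let γ_ε be the pushforward of γ under x ↦ ε·x. Then the family (γ_ε) satisfies the large deviation principle with speed ε² and good rate function I(x) = ‖x‖²/2; that is: (i) for every closed set F ⊆ E, limsup_{ε→0⁺} ε² log γ_ε(F) ≤ − inf_{x∈F} ‖x‖²/2, and (ii) for every open set G ⊆ E, liminf_{ε→0⁺} ε² log γ_ε(G) ≥ − inf_{x∈G} ‖x‖²/2. -/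
open MeasureTheory Filter Metric Set Topology Real

/-- A family of Borel measures `(μ ε)_{ε>0}` satisfies the large deviation principle with
speed `ε²` and good rate function `I : X → EReal`: `I` is nonnegative, lower semicontinuous,
has compact sublevel sets, and the usual upper bound on closed sets and lower bound on open
sets hold (with `ε² log μ ε (·)` computed in the extended reals). -/
def HasLDP {X : Type*} [TopologicalSpace X] [MeasurableSpace X]
    (μ : ℝ → Measure X) (I : X → EReal) : Prop :=
  (∀ x, 0 ≤ I x) ∧
  LowerSemicontinuous I ∧
  (∀ c : ℝ, IsCompact {x | I x ≤ (c : EReal)}) ∧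
  (∀ F : Set X, IsClosed F →
    Filter.limsup (fun ε : ℝ => ((ε ^ 2 : ℝ) : EReal) * ENNReal.log (μ ε F))
      (𝓝[>] (0 : ℝ)) ≤ -⨅ x ∈ F, I x) ∧
  (∀ G : Set X, IsOpen G →
    -⨅ x ∈ G, I x ≤
      Filter.liminf (fun ε : ℝ => ((ε ^ 2 : ℝ) : EReal) * ENNReal.log (μ ε G))
        (𝓝[>] (0 : ℝ)))

namespace Schilder

lemma tendsto_aux (d : ℕ) (L a : ℝ) :
    Tendsto (fun ε : ℝ => ε ^ 2 * (L - d * Real.log ε - (1 / ε ^ 2 - 1) * a))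
      (𝓝[>] (0 : ℝ)) (𝓝 (-a)) := by
  have h2 : Tendsto (fun ε : ℝ => ε ^ 2) (𝓝[>] (0 : ℝ)) (𝓝 0) := by
    have : Tendsto (fun ε : ℝ => ε ^ 2) (𝓝 (0 : ℝ)) (𝓝 (0 ^ 2)) :=
      (continuous_pow 2).tendsto 0
    simpa using this.mono_left nhdsWithin_le_nhds
  have h3 : Tendsto (fun ε : ℝ => Real.log ε * ε ^ 2) (𝓝[>] (0 : ℝ)) (𝓝 0) := by
    have := tendsto_log_mul_rpow_nhdsGT_zero (r := 2) (by norm_num)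
    simpa using this
  have h4 := ((h2.mul_const (L + a)).sub (h3.const_mul (d : ℝ))).sub_const a
  simp only [zero_mul, mul_zero, sub_zero, zero_sub] at h4
  refine h4.congr' ?_
  filter_upwards [self_mem_nhdsWithin] with ε hε
  have : ε ≠ 0 := ne_of_gt hε
  field_simp
  ring

lemma tendsto_log (d : ℕ) {C : ℝ} (hC : 0 < C) (a : ℝ) :
    Tendsto (fun ε : ℝ => ((ε ^ 2 : ℝ) : EReal) *
      ENNReal.log (ENNReal.ofReal (C * (ε ^ d)⁻¹ * Real.exp (-((1 / ε ^ 2 - 1) * a)))))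
      (𝓝[>] (0 : ℝ)) (𝓝 ((-a : ℝ) : EReal)) := by
  have h := (continuous_coe_real_ereal.tendsto (-a)).comp (tendsto_aux d (Real.log C) a)
  refine h.congr' ?_
  filter_upwards [self_mem_nhdsWithin] with ε hε
  have hε : 0 < ε := hε
  rw [ENNReal.log_ofReal_of_pos (by positivity), Real.log_mul (by positivity) (by positivity),
    Real.log_mul (by positivity) (by positivity), Real.log_exp, Real.log_inv, Real.log_pow,
    ← EReal.coe_mul]
  simp only [Function.comp]
  congr 1

lemma density (d : ℕ) (c : ℝ) {ε : ℝ} (hε : 0 < ε) {A : Set (EuclideanSpace ℝ (Fin d))}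
    (hA : MeasurableSet A) :
    Measure.map (fun x => ε • x) ((volume : Measure (EuclideanSpace ℝ (Fin d))).withDensity
      (fun x => ENNReal.ofReal (c * Real.exp (-‖x‖ ^ 2 / 2)))) A
    = ENNReal.ofReal ((ε ^ d)⁻¹) *
      ∫⁻ y in A, ENNReal.ofReal (c * Real.exp (-(1 / ε ^ 2 * (‖y‖ ^ 2 / 2)))) := by
  have hm : Measurable (fun x : EuclideanSpace ℝ (Fin d) => ε • x) := by fun_prop
  have key := Measure.map_addHaar_smul (volume : Measure (EuclideanSpace ℝ (Fin d))) hε.ne'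
  rw [Measure.map_apply hm hA, withDensity_apply _ (hm hA)]
  have := setLIntegral_map (μ := (volume : Measure (EuclideanSpace ℝ (Fin d))))
    (f := fun y => ENNReal.ofReal (c * Real.exp (-(1 / ε ^ 2 * (‖y‖ ^ 2 / 2))))) hA
    (by fun_prop) hm
  have e : (fun x : EuclideanSpace ℝ (Fin d) => ε • x) = (ε • ·) := rfl
  rw [e, key, Measure.restrict_smul, lintegral_smul_measure] at this
  have hd : |(ε ^ Module.finrank ℝ (EuclideanSpace ℝ (Fin d)))⁻¹| = (ε ^ d)⁻¹ := by
    rw [finrank_euclideanSpace_fin, abs_of_pos (by positivity)]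
  rw [hd, smul_eq_mul] at this
  rw [this]
  refine lintegral_congr fun x => ?_
  congr 3
  rw [norm_smul, Real.norm_of_nonneg hε.le]
  field_simp

lemma finite_integral (d : ℕ) (c : ℝ) :
    ∫⁻ y : EuclideanSpace ℝ (Fin d), ENNReal.ofReal (c * Real.exp (-(‖y‖ ^ 2 / 2))) < ⊤ := by
  have h := GaussianFourier.integrable_cexp_neg_mul_sq_norm_add (V := EuclideanSpace ℝ (Fin d))
    (b := 1 / 2) (by norm_num) 0 0
  have h2 := (h.norm.const_mul c)
  refine lt_of_le_of_lt (lintegral_mono fun y => ?_) h2.lintegral_lt_top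
  apply le_of_eq
  congr 2
  rw [Complex.norm_exp]
  congr 1
  simp [← Complex.ofReal_pow]
  ring

lemma upper (d : ℕ) {c : ℝ} (hc : 0 < c) {F : Set (EuclideanSpace ℝ (Fin d))}
    (hF : MeasurableSet F) {a : ℝ} (ha : ∀ x ∈ F, a ≤ ‖x‖ ^ 2 / 2) :
    limsup (fun ε : ℝ => ((ε ^ 2 : ℝ) : EReal) * ENNReal.log
      (Measure.map (fun x => ε • x) ((volume : Measure (EuclideanSpace ℝ (Fin d))).withDensity
      (fun x => ENNReal.ofReal (c * Real.exp (-‖x‖ ^ 2 / 2)))) F)) (𝓝[>] (0 : ℝ))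
      ≤ ((-a : ℝ) : EReal) := by
  set K := ∫⁻ y : EuclideanSpace ℝ (Fin d), ENNReal.ofReal (c * Real.exp (-(‖y‖ ^ 2 / 2))) with hK
  have hKt : K < ⊤ := finite_integral d c
  have hC : 0 < K.toReal + 1 := by positivity
  have hKC : K ≤ ENNReal.ofReal (K.toReal + 1) := by
    rw [← ENNReal.ofReal_toReal hKt.ne]
    exact ENNReal.ofReal_le_ofReal (by simp)
  rw [← (tendsto_log d hC a).limsup_eq]
  refine limsup_le_limsup ?_
  have h1 : ∀ᶠ ε : ℝ in 𝓝[>] (0 : ℝ), ε < 1 :=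
    nhdsWithin_le_nhds (Iio_mem_nhds one_pos)
  filter_upwards [self_mem_nhdsWithin, h1] with ε hε hε1
  have hε : 0 < ε := hε
  refine mul_le_mul_of_nonneg_left (ENNReal.log_monotone ?_) (by exact_mod_cast sq_nonneg ε)
  rw [density d c hε hF]
  have hinv : 1 ≤ 1 / ε ^ 2 := by
    rw [le_div_iff₀ (by positivity)]
    nlinarith
  calc ENNReal.ofReal ((ε ^ d)⁻¹) *
        ∫⁻ y in F, ENNReal.ofReal (c * Real.exp (-(1 / ε ^ 2 * (‖y‖ ^ 2 / 2))))
      ≤ ENNReal.ofReal ((ε ^ d)⁻¹) *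
        ∫⁻ y in F, ENNReal.ofReal (Real.exp (-((1 / ε ^ 2 - 1) * a))) *
          ENNReal.ofReal (c * Real.exp (-(‖y‖ ^ 2 / 2))) := by
        refine mul_le_mul_right (setLIntegral_mono' hF fun y hy => ?_) _
        rw [← ENNReal.ofReal_mul (by positivity)]
        refine ENNReal.ofReal_le_ofReal ?_
        rw [mul_left_comm, ← Real.exp_add]
        gcongr
        nlinarith [mul_le_mul_of_nonneg_left (ha y hy) (sub_nonneg.2 hinv)]
    _ ≤ ENNReal.ofReal ((ε ^ d)⁻¹) * (ENNReal.ofReal (Real.exp (-((1 / ε ^ 2 - 1) * a))) * K) := by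
        rw [lintegral_const_mul _ (by fun_prop)]
        gcongr
        exact setLIntegral_le_lintegral _ _
    _ ≤ ENNReal.ofReal ((ε ^ d)⁻¹) * (ENNReal.ofReal (Real.exp (-((1 / ε ^ 2 - 1) * a))) *
          ENNReal.ofReal (K.toReal + 1)) := by gcongr
    _ = _ := by
        rw [← ENNReal.ofReal_mul (by positivity), ← ENNReal.ofReal_mul (by positivity)]
        congr 1
        ring

lemma lower (d : ℕ) {c : ℝ} (hc : 0 < c) {G : Set (EuclideanSpace ℝ (Fin d))}
    (hG : IsOpen G) {x : EuclideanSpace ℝ (Fin d)} (hx : x ∈ G) {a : ℝ} (ha : ‖x‖ ^ 2 / 2 < a) :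
    ((-a : ℝ) : EReal) ≤ liminf (fun ε : ℝ => ((ε ^ 2 : ℝ) : EReal) * ENNReal.log
      (Measure.map (fun x => ε • x) ((volume : Measure (EuclideanSpace ℝ (Fin d))).withDensity
      (fun x => ENNReal.ofReal (c * Real.exp (-‖x‖ ^ 2 / 2)))) G)) (𝓝[>] (0 : ℝ)) := by
  have hU : IsOpen (G ∩ {y | ‖y‖ ^ 2 / 2 < a}) :=
    hG.inter (isOpen_lt (by fun_prop) continuous_const)
  obtain ⟨r, hr, hball⟩ := Metric.isOpen_iff.1 hU x ⟨hx, ha⟩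
  have hVt : (volume (ball x r)) ≠ ⊤ := measure_ball_lt_top.ne
  have hV0 : 0 < (volume (ball x r)).toReal :=
    ENNReal.toReal_pos (measure_ball_pos _ _ hr).ne' hVt
  set V := (volume (ball x r)).toReal with hV
  have ha0 : 0 < a := lt_of_le_of_lt (by positivity) ha
  have hC : 0 < c * V * Real.exp (-a) := by positivity
  rw [← (tendsto_log d hC a).liminf_eq]
  refine liminf_le_liminf ?_
  filter_upwards [self_mem_nhdsWithin] with ε hε
  have hε : 0 < ε := hε
  refine mul_le_mul_of_nonneg_left (ENNReal.log_monotone ?_) (by exact_mod_cast sq_nonneg ε)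
  rw [density d c hε hG.measurableSet]
  calc _ = ENNReal.ofReal ((ε ^ d)⁻¹) *
        ∫⁻ y in ball x r, ENNReal.ofReal (c * Real.exp (-(1 / ε ^ 2 * a))) := by
        rw [setLIntegral_const, ← ENNReal.ofReal_toReal hVt, ← hV,
          ← ENNReal.ofReal_mul (by positivity), ← ENNReal.ofReal_mul (by positivity)]
        congr 1
        have : Real.exp (-(1 / ε ^ 2 * a)) =
            Real.exp (-a) * Real.exp (-((1 / ε ^ 2 - 1) * a)) := by
          rw [← Real.exp_add]
          congr 1
          ring
        rw [this]
        ring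
    _ ≤ ENNReal.ofReal ((ε ^ d)⁻¹) *
        ∫⁻ y in ball x r, ENNReal.ofReal (c * Real.exp (-(1 / ε ^ 2 * (‖y‖ ^ 2 / 2)))) := by
        refine mul_le_mul_right (setLIntegral_mono' measurableSet_ball fun y hy => ?_) _
        have := (hball hy).2
        simp only [mem_ofPred_eq] at this
        gcongr
    _ ≤ _ := by
        gcongr
        exact fun y hy => (hball hy).1

end Schilder

/-- **Finite-dimensional Schilder theorem.** The scalings `γ_ε` of the standard Gaussian
measure on `ℝ^d` satisfy the LDP with speed `ε²` and good rate function `x ↦ ‖x‖²/2`. -/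
theorem schilder_finite_dimensional (d : ℕ)
    (γ : Measure (EuclideanSpace ℝ (Fin d)))
    (hγ : γ = volume.withDensity
      (fun x => ENNReal.ofReal ((2 * π) ^ (-(d : ℝ) / 2) * Real.exp (-‖x‖ ^ 2 / 2)))) :
    HasLDP (fun ε : ℝ => Measure.map (fun x => ε • x) γ)
      (fun x => ((‖x‖ ^ 2 / 2 : ℝ) : EReal)) := by
  have hc : 0 < (2 * π) ^ (-(d : ℝ) / 2) := by positivity
  subst hγ
  refine ⟨fun x => ?_, ?_, fun c => ?_, fun F hF => ?_, fun G hG => ?_⟩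
  · exact EReal.coe_nonneg.2 (by positivity : (0 : ℝ) ≤ ‖x‖ ^ 2 / 2)
  · refine Continuous.lowerSemicontinuous ?_
    exact continuous_coe_real_ereal.comp (by fun_prop)
  · simp only [EReal.coe_le_coe_iff]
    refine Metric.isCompact_of_isClosed_isBounded
      (isClosed_le (by fun_prop) continuous_const) ?_
    refine (Metric.isBounded_closedBall (x := (0 : EuclideanSpace ℝ (Fin d)))
      (r := 1 + 2 * c)).subset fun x hx => ?_
    simp only [mem_ofPred_eq] at hx
    rw [mem_closedBall_zero_iff]
    nlinarith [sq_nonneg (‖x‖ - 1)]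
  · rw [EReal.le_neg]
    refine EReal.ge_of_forall_gt_iff_ge.1 fun a ha => ?_
    rw [EReal.le_neg, ← EReal.coe_neg]
    refine Schilder.upper d hc hF.measurableSet fun x hx => ?_
    exact EReal.coe_le_coe_iff.1 (ha.le.trans (iInf₂_le x hx))
  · rw [EReal.neg_le]
    refine le_iInf₂ fun x hx => ?_
    refine EReal.le_of_forall_lt_iff_le.1 fun a ha => ?_
    rw [EReal.neg_le, ← EReal.coe_neg]
    exact Schilder.lower d hc hG hx (EReal.coe_lt_coe_iff.1 ha)
end

section
/- ε-dependent tilting lemma: Let B be a Banach space and (μ₀^ε)_{ε>0} a family of Borel probability measures on B that is exponentially tight and satisfies the LDP with speed ε² and good rate function I₀ : B → [0,∞]. For ε > 0 let F^ε : B → ℝ admit the expansion F^ε(y) = F₀(y) + ε F₁(y) + (ε²/2) F₂(y) + ⋯ + (ε^{n−1}/(n−1)!) F_{n−1}(y) + εⁿ R_n(ε, y), where F₀ is continuous, lim_{ε→0⁺} R_n(ε, y) = 0 for every y ∈ B, and for every index 0 ≤ i ≤ n−1 and every γ > 0, limsup_{ε→0⁺} ε² log ∫_B exp( γ max{ |F_i(y)|,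 |R_n(ε, y)| } / ε² ) dμ₀^ε(y) < ∞. Suppose Z_ε := ∫_B exp(−F^ε(y)/ε²) dμ₀^ε(y) ∈ (0,∞), define μ^ε(A) = Z_ε^{−1} ∫_A exp(−F^ε(y)/ε²) dμ₀^ε(y), and assume (μ^ε) is exponentially tight. Then (μ^ε) satisfies the LDP with speed ε² and good rate function I(y) = I₀(y) + F₀(y) − inf_{z∈B} { F₀(z) + I₀(z) }. -/
open MeasureTheory Filter Metric Set Topology

/-- A family of Borel measures `(μ ε)_{ε>0}` is exponentially tight (at speed `ε²`). -/
def ExpTight {X : Type*} [TopologicalSpace X] [MeasurableSpace X]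
    (μ : ℝ → Measure X) : Prop :=
  ∀ α : ℝ, 0 < α → ∃ K : Set X, IsCompact K ∧
    Filter.limsup (fun ε : ℝ => ((ε ^ 2 : ℝ) : EReal) * ENNReal.log (μ ε Kᶜ))
      (𝓝[>] (0 : ℝ)) ≤ ((-α : ℝ) : EReal)

namespace Tilt

/-- The exponential scale `exp (c / ε²)`. -/
noncomputable def P (c ε : ℝ) : ENNReal := ENNReal.ofReal (Real.exp (c / ε ^ 2))

theorem P_add (a b ε : ℝ) : P (a + b) ε = P a ε * P b ε := by
  unfold P
  rw [add_div, Real.exp_add, ENNReal.ofReal_mul (Real.exp_pos _).le]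

theorem P_mono {a b : ℝ} (h : a ≤ b) (ε : ℝ) : P a ε ≤ P b ε := by
  unfold P
  apply ENNReal.ofReal_le_ofReal
  apply Real.exp_le_exp.2
  gcongr

theorem P_ne_top (a ε : ℝ) : P a ε ≠ ⊤ := ENNReal.ofReal_ne_top

theorem P_pos (a ε : ℝ) : 0 < P a ε := ENNReal.ofReal_pos.2 (Real.exp_pos _)

theorem P_zero (ε : ℝ) : P 0 ε = 1 := by simp [P]

theorem log_P (c ε : ℝ) : ENNReal.log (P c ε) = ((c / ε ^ 2 : ℝ) : EReal) := by
  unfold P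
  rw [← EReal.exp_coe, EReal.log_exp]

theorem scaled_P {ε : ℝ} (hε : 0 < ε) (c : ℝ) :
    ((ε ^ 2 : ℝ) : EReal) * ENNReal.log (P c ε) = c := by
  rw [log_P, ← EReal.coe_mul]
  congr 1
  field_simp

theorem scaled_le_of_le {ε : ℝ} (hε : 0 < ε) {c : ℝ} {a : ENNReal} (h : a ≤ P c ε) :
    ((ε ^ 2 : ℝ) : EReal) * ENNReal.log a ≤ c := by
  rw [← scaled_P hε c]
  exact mul_le_mul_of_nonneg_left (ENNReal.log_le_log h) (by exact_mod_cast (sq_nonneg ε))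

theorem le_scaled_of_le {ε : ℝ} (hε : 0 < ε) {c : ℝ} {a : ENNReal} (h : P c ε ≤ a) :
    (c : EReal) ≤ ((ε ^ 2 : ℝ) : EReal) * ENNReal.log a := by
  rw [← scaled_P hε c]
  exact mul_le_mul_of_nonneg_left (ENNReal.log_le_log h) (by exact_mod_cast (sq_nonneg ε))

theorem le_of_scaled_lt {ε : ℝ} (hε : 0 < ε) {c : ℝ} {a : ENNReal}
    (h : ((ε ^ 2 : ℝ) : EReal) * ENNReal.log a < c) : a ≤ P c ε := by
  by_contra! h'
  exact absurd (le_scaled_of_le hε h'.le) (not_le.2 h)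

theorem le_of_lt_scaled {ε : ℝ} (hε : 0 < ε) {c : ℝ} {a : ENNReal}
    (h : (c : EReal) < ((ε ^ 2 : ℝ) : EReal) * ENNReal.log a) : P c ε ≤ a := by
  by_contra! h'
  exact absurd (scaled_le_of_le hε h'.le) (not_le.2 h)

theorem ev_pos : ∀ᶠ ε : ℝ in 𝓝[>] (0 : ℝ), 0 < ε := self_mem_nhdsWithin

theorem ev_small {δ : ℝ} (hδ : 0 < δ) : ∀ᶠ ε : ℝ in 𝓝[>] (0 : ℝ), ε ≤ δ :=
  mem_nhdsWithin_of_mem_nhds (Iic_mem_nhds hδ)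

theorem ev_of_limsup_lt {a : ℝ → ENNReal} {c : ℝ}
    (h : limsup (fun ε : ℝ => ((ε ^ 2 : ℝ) : EReal) * ENNReal.log (a ε)) (𝓝[>] (0 : ℝ)) < c) :
    ∀ᶠ ε in 𝓝[>] (0 : ℝ), a ε ≤ P c ε := by
  filter_upwards [ev_pos, eventually_lt_of_limsup_lt h] with ε h1 h2
  exact le_of_scaled_lt h1 h2

theorem ev_of_lt_liminf {a : ℝ → ENNReal} {c : ℝ}
    (h : c < liminf (fun ε : ℝ => ((ε ^ 2 : ℝ) : EReal) * ENNReal.log (a ε)) (𝓝[>] (0 : ℝ))) :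
    ∀ᶠ ε in 𝓝[>] (0 : ℝ), P c ε ≤ a ε := by
  filter_upwards [ev_pos, eventually_lt_of_lt_liminf h] with ε h1 h2
  exact le_of_lt_scaled h1 h2

theorem ev_const (k : ℕ) {c c' : ℝ} (h : c < c') :
    ∀ᶠ ε in 𝓝[>] (0 : ℝ), (k : ENNReal) * P c ε ≤ P c' ε := by
  have h1 : 0 < (c' - c) / (k + 1) := div_pos (sub_pos.2 h) (by positivity)
  filter_upwards [ev_pos, ev_small h1, ev_small one_pos] with ε h0 h2 h3
  have hc : c' = (c' - c) + c := by ring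
  rw [hc, P_add]
  gcongr
  unfold P
  rw [← ENNReal.ofReal_natCast]
  apply ENNReal.ofReal_le_ofReal
  have h4 : (k : ℝ) + 1 ≤ (c' - c) / ε := by
    rw [le_div_iff₀ (by positivity)] at h2 ⊢
    linarith
  have h5 : (c' - c) / ε ≤ (c' - c) / ε ^ 2 := by
    apply div_le_div_of_nonneg_left (sub_pos.2 h).le (by positivity)
    nlinarith
  have := Real.add_one_le_exp ((c' - c) / ε ^ 2)
  linarith

section
variable {B : Type*} [MeasurableSpace B]

theorem tail {ν : Measure B} {S : B → ℝ} {ε C : ℝ} (hSm : Measurable S)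
    (h : ∫⁻ y, P (2 * S y) ε ∂ν ≤ P C ε) (L : ℝ) :
    ∫⁻ y in {y | L < S y}, P (S y) ε ∂ν ≤ P (C - L) ε := by
  have hm : MeasurableSet {y | L < S y} := measurableSet_lt measurable_const hSm
  calc ∫⁻ y in {y | L < S y}, P (S y) ε ∂ν
      ≤ ∫⁻ y in {y | L < S y}, P (-L) ε * P (2 * S y) ε ∂ν := by
        apply setLIntegral_mono' hm
        intro y hy
        rw [← P_add]
        apply P_mono
        have : L < S y := hy
        linarith
    _ ≤ ∫⁻ y, P (-L) ε * P (2 * S y) ε ∂ν := setLIntegral_le_lintegral _ _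
    _ = P (-L) ε * ∫⁻ y, P (2 * S y) ε ∂ν := lintegral_const_mul' _ _ (P_ne_top _ _)
    _ ≤ P (-L) ε * P C ε := by gcongr
    _ = P (C - L) ε := by rw [← P_add]; congr 1; ring

theorem set_upper {ν : Measure B} {f : B → ENNReal} {A : Set B} (hA : MeasurableSet A)
    {c : ENNReal} (h : ∀ y ∈ A, f y ≤ c) : ∫⁻ y in A, f y ∂ν ≤ c * ν A := by
  rw [← setLIntegral_const]
  exact setLIntegral_mono' hA h

theorem set_lower {ν : Measure B} {f : B → ENNReal} {A : Set B} (hA : MeasurableSet A)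
    {c : ENNReal} (h : ∀ y ∈ A, c ≤ f y) : c * ν A ≤ ∫⁻ y in A, f y ∂ν := by
  rw [← setLIntegral_const]
  exact setLIntegral_mono' hA h
end

section
variable {B : Type*} [NormedAddCommGroup B] [MeasurableSpace B] [BorelSpace B]

theorem lower (μ₀ : ℝ → Measure B) (I₀ : B → EReal) (hLDP₀ : HasLDP μ₀ I₀)
    (F₀ : B → ℝ) (hF₀ : Continuous F₀) (Fe S : ℝ → B → ℝ) (C : ℝ)
    (hSm : ∀ ε, Measurable (S ε))
    (hS0 : ∀ ε, 0 < ε → ε ≤ 1 → ∀ y, |F₀ y| ≤ S ε y)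
    (hS2 : ∀ ε, 0 < ε → ε ≤ 1 → ∀ y, |Fe ε y - F₀ y| ≤ ε * S ε y)
    (hSC : ∀ᶠ ε in 𝓝[>] (0 : ℝ), ∫⁻ y, P (2 * S ε y) ε ∂(μ₀ ε) ≤ P C ε)
    (G : Set B) (hG : IsOpen G) (x : B) (hx : x ∈ G) (t : ℝ)
    (ht : (F₀ x : EReal) + I₀ x < t) :
    ∀ᶠ ε in 𝓝[>] (0 : ℝ), P (-t) ε ≤ ∫⁻ y in G, P (-Fe ε y) ε ∂(μ₀ ε) := by
  obtain ⟨hpos, hlsc, hcpt, hup, hlow⟩ := hLDP₀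
  obtain ⟨b, hb1, hb2⟩ : ∃ b : ℝ, I₀ x < b ∧ F₀ x + b < t := by
    have : I₀ x < ((t - F₀ x : ℝ) : EReal) := by
      have := hpos x
      generalize I₀ x = i at *
      induction i with
      | bot => simp at this
      | top => simp at ht
      | coe r => norm_cast at *; linarith
    obtain ⟨b, h1, h2⟩ := EReal.lt_iff_exists_real_btwn.1 this
    norm_cast at h2
    exact ⟨b, h1, by linarith⟩
  obtain ⟨δ, hδ, hδt⟩ : ∃ δ : ℝ, 0 < δ ∧ F₀ x + b + 3 * δ = t :=
    ⟨(t - F₀ x - b) / 3, by linarith, by ring⟩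
  set U : Set B := G ∩ {y | F₀ y < F₀ x + δ} with hU
  have hUo : IsOpen U := hG.inter (isOpen_lt hF₀ continuous_const)
  have hxU : x ∈ U := ⟨hx, by simp [hδ]⟩
  have hUl : ∀ᶠ ε in 𝓝[>] (0 : ℝ), P (-b) ε ≤ μ₀ ε U := by
    apply ev_of_lt_liminf
    refine lt_of_lt_of_le ?_ (hlow U hUo)
    rw [EReal.coe_neg, EReal.neg_lt_neg_iff]
    exact lt_of_le_of_lt (iInf₂_le x hxU) hb1
  set L := max 1 (C + b + δ) with hL
  have hL0 : 0 < L := lt_of_lt_of_le one_pos (le_max_left _ _)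
  filter_upwards [ev_pos, ev_small one_pos, ev_small (div_pos hδ hL0), hUl, hSC,
    ev_const 2 (show -b - δ < -b by linarith)] with ε h0 h1 h2 h3 h4 h5
  have hεL : ε * L ≤ δ := (le_div_iff₀ hL0).1 h2
  have hmT : MeasurableSet {y | L < S ε y} := measurableSet_lt measurable_const (hSm ε)
  have hmT' : MeasurableSet {y | S ε y ≤ L} := measurableSet_le (hSm ε) measurable_const
  set W := U ∩ {y | S ε y ≤ L} with hW
  have hT : μ₀ ε {y | L < S ε y} ≤ P (-b - δ) ε := by
    calc μ₀ ε {y | L < S ε y} = 1 * μ₀ ε {y | L < S ε y} := (one_mul _).symm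
      _ ≤ ∫⁻ y in {y | L < S ε y}, P (S ε y) ε ∂(μ₀ ε) := by
        apply set_lower hmT
        intro y hy
        rw [← P_zero ε]
        exact P_mono (le_trans (abs_nonneg _) (hS0 ε h0 h1 y)) _
      _ ≤ P (C - L) ε := tail (hSm ε) h4 L
      _ ≤ _ := P_mono (by have := le_max_right 1 (C + b + δ); linarith) _
  have hWl : P (-b - δ) ε ≤ μ₀ ε W := by
    have hsub : U ⊆ W ∪ {y | L < S ε y} := by
      intro y hy
      rcases le_or_gt (S ε y) L with h | h
      · exact Or.inl ⟨hy, h⟩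
      · exact Or.inr h
    have : P (-b - δ) ε + P (-b - δ) ε ≤ μ₀ ε W + P (-b - δ) ε := by
      calc P (-b - δ) ε + P (-b - δ) ε = ((2 : ℕ) : ENNReal) * P (-b - δ) ε := by
            push_cast; ring
        _ ≤ P (-b) ε := h5
        _ ≤ μ₀ ε U := h3
        _ ≤ μ₀ ε (W ∪ {y | L < S ε y}) := measure_mono hsub
        _ ≤ μ₀ ε W + μ₀ ε {y | L < S ε y} := measure_union_le _ _
        _ ≤ _ := by gcongr
    exact (ENNReal.add_le_add_iff_right (P_ne_top _ _)).1 this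
  calc P (-t) ε = P (-(F₀ x + 2 * δ)) ε * P (-b - δ) ε := by
        rw [← P_add]; congr 1; linarith
    _ ≤ P (-(F₀ x + 2 * δ)) ε * μ₀ ε W := by gcongr
    _ ≤ ∫⁻ y in W, P (-Fe ε y) ε ∂(μ₀ ε) := by
        apply set_lower (hUo.measurableSet.inter hmT')
        rintro y ⟨⟨_, hy1⟩, hy2⟩
        apply P_mono
        have h6 := (abs_le.1 (hS2 ε h0 h1 y)).2
        have hy1' : F₀ y < F₀ x + δ := hy1
        have hy2' : S ε y ≤ L := hy2
        have : ε * S ε y ≤ ε * L := by gcongr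
        linarith
    _ ≤ _ := lintegral_mono_set (fun y hy => hy.1.1)

theorem upper (μ₀ : ℝ → Measure B) (htight₀ : ExpTight μ₀) (I₀ : B → EReal)
    (hLDP₀ : HasLDP μ₀ I₀)
    (F₀ : B → ℝ) (hF₀ : Continuous F₀) (Fe S : ℝ → B → ℝ) (C : ℝ)
    (hSm : ∀ ε, Measurable (S ε))
    (hS1 : ∀ ε, 0 < ε → ε ≤ 1 → ∀ y, |Fe ε y| ≤ S ε y)
    (hS2 : ∀ ε, 0 < ε → ε ≤ 1 → ∀ y, |Fe ε y - F₀ y| ≤ ε * S ε y)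
    (hSC : ∀ᶠ ε in 𝓝[>] (0 : ℝ), ∫⁻ y, P (2 * S ε y) ε ∂(μ₀ ε) ≤ P C ε)
    (F : Set B) (hF : IsClosed F) (s : ℝ)
    (hs : ∀ x ∈ F, ((-s : ℝ) : EReal) < (F₀ x : EReal) + I₀ x) (δ : ℝ) (hδ : 0 < δ) :
    ∀ᶠ ε in 𝓝[>] (0 : ℝ), ∫⁻ y in F, P (-Fe ε y) ε ∂(μ₀ ε) ≤ P (s + δ) ε := by
  obtain ⟨hpos, hlsc, hcpt, hup, hlow⟩ := hLDP₀
  set L := max 1 (C - s) with hL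
  have hL0 : 0 < L := lt_of_lt_of_le one_pos (le_max_left _ _)
  have hLC : C - s ≤ L := le_max_right _ _
  set α := max 1 (L - s + 1) with hα
  have hα0 : 0 < α := lt_of_lt_of_le one_pos (le_max_left _ _)
  have hαL : L - s + 1 ≤ α := le_max_right _ _
  obtain ⟨K, hK, hKα⟩ := htight₀ α hα0
  have hKc : ∀ᶠ ε in 𝓝[>] (0 : ℝ), μ₀ ε Kᶜ ≤ P (s - L) ε := by
    apply ev_of_limsup_lt
    refine lt_of_le_of_lt hKα ?_
    norm_cast
    linarith
  have hcov : ∃ k : ℕ, ∀ᶠ ε in 𝓝[>] (0 : ℝ),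
      ∫⁻ y in (K ∩ F) ∩ {y | S ε y ≤ L}, P (-Fe ε y) ε ∂(μ₀ ε) ≤ k * P (s + δ / 2) ε := by
    refine (hK.inter_right hF).induction_on (p := fun A => ∃ k : ℕ, ∀ᶠ ε in 𝓝[>] (0 : ℝ),
      ∫⁻ y in A ∩ {y | S ε y ≤ L}, P (-Fe ε y) ε ∂(μ₀ ε) ≤ k * P (s + δ / 2) ε) ?_ ?_ ?_ ?_
    · exact ⟨0, by simp⟩
    · rintro A A' hAA ⟨k, hk⟩
      refine ⟨k, hk.mono fun ε h => le_trans (lintegral_mono_set ?_) h⟩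
      exact inter_subset_inter_left _ hAA
    · rintro A A' ⟨k, hk⟩ ⟨k', hk'⟩
      refine ⟨k + k', ?_⟩
      filter_upwards [hk, hk'] with ε h h'
      rw [union_inter_distrib_right]
      refine (lintegral_union_le _ _ _).trans ?_
      push_cast
      rw [add_mul]
      exact add_le_add h h'
    · rintro x ⟨-, hxF⟩
      obtain ⟨b', hb1, hb2⟩ : ∃ b : ℝ, -s - F₀ x < b ∧ b < I₀ x := by
        have h1 : ((-s - F₀ x : ℝ) : EReal) < I₀ x := by
          have h2 := hs x hxF
          have := hpos x
          generalize I₀ x = i at *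
          induction i with
          | bot => simp at this
          | top => exact EReal.coe_lt_top _
          | coe r => norm_cast at *; linarith
        obtain ⟨b, h1, h2⟩ := EReal.lt_iff_exists_real_btwn.1 h1
        norm_cast at h1
        exact ⟨b, h1, h2⟩
      obtain ⟨b, hb3, hb4⟩ := exists_between hb1
      have hn1 : {y | (b' : EReal) < I₀ y} ∩ {y | -s - b < F₀ y} ∈ 𝓝 x := by
        apply inter_mem
        · exact hlsc x _ hb2
        · exact (isOpen_lt continuous_const hF₀).mem_nhds (by simp; linarith)
      obtain ⟨U, hUn, hUc, hUs⟩ := exists_mem_nhds_isClosed_subset hn1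
      refine ⟨U, mem_nhdsWithin_of_mem_nhds hUn, 1, ?_⟩
      have hUu : ∀ᶠ ε in 𝓝[>] (0 : ℝ), μ₀ ε U ≤ P (-b) ε := by
        apply ev_of_limsup_lt
        refine lt_of_le_of_lt (hup U hUc) ?_
        rw [EReal.coe_neg, EReal.neg_lt_neg_iff]
        refine lt_of_lt_of_le (EReal.coe_lt_coe_iff.2 hb4) ?_
        exact le_iInf₂ fun y hy => (hUs hy).1.le
      filter_upwards [ev_pos, ev_small one_pos, ev_small (div_pos (half_pos hδ) hL0), hUu]
        with ε h0 h1 h2 h3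
      have hεL : ε * L ≤ δ / 2 := (le_div_iff₀ hL0).1 h2
      have hmT' : MeasurableSet {y | S ε y ≤ L} := measurableSet_le (hSm ε) measurable_const
      calc ∫⁻ y in U ∩ {y | S ε y ≤ L}, P (-Fe ε y) ε ∂(μ₀ ε)
          ≤ P (s + b + δ / 2) ε * μ₀ ε (U ∩ {y | S ε y ≤ L}) := by
            apply set_upper (hUc.measurableSet.inter hmT')
            rintro y ⟨hy1, hy2⟩
            apply P_mono
            have h6 := (abs_le.1 (hS2 ε h0 h1 y)).1
            have hy1' : -s - b < F₀ y := (hUs hy1).2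
            have hy2' : S ε y ≤ L := hy2
            have : ε * S ε y ≤ ε * L := by gcongr
            linarith
        _ ≤ P (s + b + δ / 2) ε * P (-b) ε := by
            gcongr
            exact (measure_mono inter_subset_left).trans h3
        _ = _ := by
            rw [← P_add, Nat.cast_one, one_mul]; congr 1; ring
  obtain ⟨k, hk⟩ := hcov
  filter_upwards [ev_pos, ev_small one_pos, hk, hKc, hSC,
    ev_const (k + 2) (show s + δ / 2 < s + δ by linarith)] with ε h0 h1 h2 h3 h4 h5
  have hmT : MeasurableSet {y | L < S ε y} := measurableSet_lt measurable_const (hSm ε)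
  have hmT' : MeasurableSet {y | S ε y ≤ L} := measurableSet_le (hSm ε) measurable_const
  have hsub : F ⊆ ((K ∩ F) ∩ {y | S ε y ≤ L}) ∪ ((Kᶜ ∩ {y | S ε y ≤ L}) ∪ {y | L < S ε y}) := by
    intro y hy
    rcases le_or_gt (S ε y) L with h | h
    · by_cases hyK : y ∈ K
      · exact Or.inl ⟨⟨hyK, hy⟩, h⟩
      · exact Or.inr (Or.inl ⟨hyK, h⟩)
    · exact Or.inr (Or.inr h)
  have e1 : ∫⁻ y in Kᶜ ∩ {y | S ε y ≤ L}, P (-Fe ε y) ε ∂(μ₀ ε) ≤ P (s + δ / 2) ε := by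
    calc _ ≤ P L ε * μ₀ ε (Kᶜ ∩ {y | S ε y ≤ L}) := by
            apply set_upper (hK.isClosed.measurableSet.compl.inter hmT')
            rintro y ⟨hy1, hy2⟩
            apply P_mono
            have h6 := (abs_le.1 (hS1 ε h0 h1 y)).1
            have hy2' : S ε y ≤ L := hy2
            linarith
      _ ≤ P L ε * P (s - L) ε := by
            gcongr
            exact (measure_mono inter_subset_left).trans h3
      _ = P s ε := by rw [← P_add]; congr 1; ring
      _ ≤ _ := P_mono (by linarith) _
  have e2 : ∫⁻ y in {y | L < S ε y}, P (-Fe ε y) ε ∂(μ₀ ε) ≤ P (s + δ / 2) ε := by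
    calc _ ≤ ∫⁻ y in {y | L < S ε y}, P (S ε y) ε ∂(μ₀ ε) := by
            apply setLIntegral_mono' hmT
            intro y _
            apply P_mono
            have h6 := (abs_le.1 (hS1 ε h0 h1 y)).1
            linarith
      _ ≤ P (C - L) ε := tail (hSm ε) h4 L
      _ ≤ _ := P_mono (by linarith) _
  calc _ ≤ _ := lintegral_mono_set hsub
    _ ≤ _ := lintegral_union_le _ _ _
    _ ≤ k * P (s + δ / 2) ε + (P (s + δ / 2) ε + P (s + δ / 2) ε) := by
        refine add_le_add h2 ((lintegral_union_le _ _ _).trans (add_le_add e1 e2))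
    _ = ((k + 2 : ℕ) : ENNReal) * P (s + δ / 2) ε := by push_cast; ring
    _ ≤ _ := h5

end

section
variable {B : Type*} [NormedAddCommGroup B] [MeasurableSpace B] [BorelSpace B]

theorem moment (μ₀ : ℝ → Measure B) (n : ℕ) (hn : 1 ≤ n) (M : ℕ → ℝ → B → ℝ)
    (hM : ∀ i ε, Measurable (M i ε))
    (hmom : ∀ i < n, ∀ γ : ℝ, 0 < γ →
      Filter.limsup (fun ε : ℝ => ((ε ^ 2 : ℝ) : EReal) *
          ENNReal.log (∫⁻ y, P (γ * M i ε y) ε ∂(μ₀ ε)))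
        (𝓝[>] (0 : ℝ)) < (⊤ : EReal)) (γ : ℝ) (hγ : 0 < γ) :
    ∃ C : ℝ, ∀ᶠ ε in 𝓝[>] (0 : ℝ),
      ∫⁻ y, P (γ * ∑ i ∈ Finset.range n, M i ε y) ε ∂(μ₀ ε) ≤ P C ε := by
  have hn0 : (0 : ℝ) < n := by exact_mod_cast hn
  have h1 : ∀ i ∈ Finset.range n, ∃ c : ℝ, ∀ᶠ ε in 𝓝[>] (0 : ℝ),
      ∫⁻ y, P (γ * n * M i ε y) ε ∂(μ₀ ε) ≤ P c ε := by
    intro i hi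
    obtain ⟨c, hc, _⟩ := EReal.lt_iff_exists_real_btwn.1
      (hmom i (Finset.mem_range.1 hi) (γ * n) (by positivity))
    exact ⟨c, ev_of_limsup_lt hc⟩
  choose! c hc using h1
  set c' := ∑ i ∈ Finset.range n, |c i| with hc'
  refine ⟨c' + 1, ?_⟩
  have h2 : ∀ᶠ ε in 𝓝[>] (0 : ℝ), ∀ i ∈ Finset.range n,
      ∫⁻ y, P (γ * n * M i ε y) ε ∂(μ₀ ε) ≤ P (c i) ε :=
    (Filter.eventually_all_finset _).2 hc
  filter_upwards [h2, ev_const n (show c' < c' + 1 by linarith)] with ε h3 h4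
  calc ∫⁻ y, P (γ * ∑ i ∈ Finset.range n, M i ε y) ε ∂(μ₀ ε)
      ≤ ∫⁻ y, ∑ i ∈ Finset.range n, P (γ * n * M i ε y) ε ∂(μ₀ ε) := by
        apply lintegral_mono
        intro y
        obtain ⟨j, hj, hmax⟩ := Finset.exists_max_image (Finset.range n) (fun i => M i ε y)
          ⟨0, Finset.mem_range.2 hn⟩
        have h5 : ∑ i ∈ Finset.range n, M i ε y ≤ n * M j ε y := by
          have := Finset.sum_le_card_nsmul _ _ _ hmax
          simpa using this
        refine le_trans (P_mono ?_ ε)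
          (Finset.single_le_sum (f := fun i => P (γ * n * M i ε y) ε) (fun _ _ => zero_le) hj)
        rw [mul_assoc]
        gcongr
    _ = ∑ i ∈ Finset.range n, ∫⁻ y, P (γ * n * M i ε y) ε ∂(μ₀ ε) := by
        apply lintegral_finsetSum
        intro i _
        unfold P
        have := hM i ε
        fun_prop
    _ ≤ ∑ i ∈ Finset.range n, P c' ε := by
        apply Finset.sum_le_sum
        intro i hi
        refine (h3 i hi).trans (P_mono ?_ ε)
        exact (le_abs_self _).trans
          (Finset.single_le_sum (f := fun i => |c i|) (fun _ _ => abs_nonneg _) hi)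
    _ = n * P c' ε := by simp
    _ ≤ _ := h4

theorem growth (μ₀ : ℝ → Measure B) (I₀ : B → EReal) (hLDP₀ : HasLDP μ₀ I₀)
    (F₀ : B → ℝ) (hF₀ : Continuous F₀) (S : ℝ → B → ℝ) (C C' : ℝ)
    (hSm : ∀ ε, Measurable (S ε))
    (hS0 : ∀ ε, 0 < ε → ε ≤ 1 → ∀ y, |F₀ y| ≤ S ε y)
    (hSC : ∀ᶠ ε in 𝓝[>] (0 : ℝ), ∫⁻ y, P (2 * S ε y) ε ∂(μ₀ ε) ≤ P C ε)
    (hSC' : ∀ᶠ ε in 𝓝[>] (0 : ℝ), ∫⁻ y, P (4 * S ε y) ε ∂(μ₀ ε) ≤ P C' ε) (x : B) :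
    ((-C : ℝ) : EReal) ≤ ((2 * F₀ x : ℝ) : EReal) + I₀ x := by
  rw [← EReal.le_of_forall_lt_iff_le]
  intro t ht
  have h := lower μ₀ I₀ hLDP₀ (fun y => 2 * F₀ y) (by fun_prop) (fun _ y => 2 * F₀ y)
    (fun ε y => 2 * S ε y) C' (fun ε => (hSm ε).const_mul 2)
    (fun ε h0 h1 y => by
      rw [abs_mul, abs_two]; exact mul_le_mul_of_nonneg_left (hS0 ε h0 h1 y) (by norm_num))
    (fun ε h0 h1 y => by
      have := (abs_nonneg _).trans (hS0 ε h0 h1 y)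
      simp only [sub_self, abs_zero]; positivity)
    (by
      filter_upwards [hSC'] with ε h
      convert h using 4
      ring)
    univ isOpen_univ x (mem_univ _) t ht
  obtain ⟨ε, h1, h2, h0, h3⟩ := (h.and (hSC.and (ev_pos.and (ev_small one_pos)))).exists
  have h4 : P (-t) ε ≤ P C ε := by
    refine h1.trans (le_trans ?_ h2)
    rw [Measure.restrict_univ]
    apply lintegral_mono
    intro y
    apply P_mono
    have := (abs_le.1 (hS0 ε h0 h3 y)).1
    linarith
  have h5 := (ENNReal.ofReal_le_ofReal_iff (Real.exp_pos _).le).1 h4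
  rw [Real.exp_le_exp, div_le_div_iff_of_pos_right (by positivity)] at h5
  norm_cast
  linarith

theorem inf_real (μ₀ : ℝ → Measure B) (hprob : ∀ ε, 0 < ε → IsProbabilityMeasure (μ₀ ε))
    (I₀ : B → EReal) (hLDP₀ : HasLDP μ₀ I₀) (F₀ : B → ℝ) (C : ℝ)
    (hg : ∀ x, ((-C : ℝ) : EReal) ≤ ((2 * F₀ x : ℝ) : EReal) + I₀ x) :
    ∃ m : ℝ, ⨅ z : B, ((F₀ z : EReal) + I₀ z) = m := by
  obtain ⟨hpos, hlsc, hcpt, hup, hlow⟩ := hLDP₀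
  have h1 : ((-C / 2 : ℝ) : EReal) ≤ ⨅ z : B, ((F₀ z : EReal) + I₀ z) := by
    apply le_iInf
    intro z
    have h2 := hg z
    have h3 := hpos z
    generalize I₀ z = i at *
    induction i with
    | bot => simp at h3
    | top => simp
    | coe r => norm_cast at *; linarith
  have h2 : ∃ x, I₀ x ≠ ⊤ := by
    by_contra! h
    have h3 := hup univ isClosed_univ
    simp only [h, mem_univ, iInf_pos] at h3
    have h4 : ∀ᶠ ε in 𝓝[>] (0 : ℝ), μ₀ ε univ ≤ P (-1) ε := by
      apply ev_of_limsup_lt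
      refine lt_of_le_of_lt h3 ?_
      simp only [iInf_top, EReal.neg_top]
      exact EReal.bot_lt_coe _
    obtain ⟨ε, h5, h0⟩ := (h4.and ev_pos).exists
    have := hprob ε h0
    rw [measure_univ, ← P_zero ε] at h5
    have h6 := (ENNReal.ofReal_le_ofReal_iff (Real.exp_pos _).le).1 h5
    rw [Real.exp_le_exp, div_le_div_iff_of_pos_right (by positivity)] at h6
    linarith
  obtain ⟨x, hx⟩ := h2
  refine ⟨(⨅ z : B, ((F₀ z : EReal) + I₀ z)).toReal, (EReal.coe_toReal ?_ ?_).symm⟩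
  · apply ne_of_lt
    refine lt_of_le_of_lt (iInf_le _ x) ?_
    exact EReal.add_lt_top (EReal.coe_ne_top _) hx
  · exact ne_of_gt (lt_of_lt_of_le (EReal.bot_lt_coe _) h1)

theorem rate_lt_iff {i : EReal} (hi : 0 ≤ i) (f m c : ℝ) :
    i + (f : EReal) - (m : EReal) < c ↔ (f : EReal) + i < ((c + m : ℝ) : EReal) := by
  induction i with
  | bot => simp at hi
  | top => simp
  | coe r => norm_cast; constructor <;> intro h <;> linarith

theorem lt_rate_iff {i : EReal} (hi : 0 ≤ i) (f m c : ℝ) :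
    (c : EReal) < i + (f : EReal) - (m : EReal) ↔ ((c + m : ℝ) : EReal) < (f : EReal) + i := by
  induction i with
  | bot => simp at hi
  | top => simp [EReal.coe_lt_top, ← EReal.coe_add]
  | coe r => norm_cast; constructor <;> intro h <;> linarith

theorem final (μ₀ : ℝ → Measure B) (hprob : ∀ ε, 0 < ε → IsProbabilityMeasure (μ₀ ε))
    (htight₀ : ExpTight μ₀) (I₀ : B → EReal)
    (hLDP₀ : HasLDP μ₀ I₀)
    (F₀ : B → ℝ) (hF₀ : Continuous F₀) (Fe S : ℝ → B → ℝ) (C C' : ℝ)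
    (hSm : ∀ ε, Measurable (S ε))
    (hS0 : ∀ ε, 0 < ε → ε ≤ 1 → ∀ y, |F₀ y| ≤ S ε y)
    (hS1 : ∀ ε, 0 < ε → ε ≤ 1 → ∀ y, |Fe ε y| ≤ S ε y)
    (hS2 : ∀ ε, 0 < ε → ε ≤ 1 → ∀ y, |Fe ε y - F₀ y| ≤ ε * S ε y)
    (hSC : ∀ᶠ ε in 𝓝[>] (0 : ℝ), ∫⁻ y, P (2 * S ε y) ε ∂(μ₀ ε) ≤ P C ε)
    (hSC' : ∀ᶠ ε in 𝓝[>] (0 : ℝ), ∫⁻ y, P (4 * S ε y) ε ∂(μ₀ ε) ≤ P C' ε)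
    (μ : ℝ → Measure B)
    (hμ : ∀ ε : ℝ, 0 < ε → ∀ A : Set B, MeasurableSet A →
      μ ε A = (∫⁻ y in A, P (-Fe ε y) ε ∂(μ₀ ε)) / (∫⁻ y, P (-Fe ε y) ε ∂(μ₀ ε))) :
    HasLDP μ (fun y => I₀ y + (F₀ y : EReal) - ⨅ z : B, ((F₀ z : EReal) + I₀ z)) := by
  have hg := growth μ₀ I₀ hLDP₀ F₀ hF₀ S C C' hSm hS0 hSC hSC'
  obtain ⟨m, hm⟩ := inf_real μ₀ hprob I₀ hLDP₀ F₀ C hg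
  have hlower := lower μ₀ I₀ hLDP₀ F₀ hF₀ Fe S C hSm hS0 hS2 hSC
  have hupper := upper μ₀ htight₀ I₀ hLDP₀ F₀ hF₀ Fe S C hSm hS1 hS2 hSC
  obtain ⟨hpos, hlsc, hcpt, hup, hlow⟩ := hLDP₀
  have hle : ∀ z, (m : EReal) ≤ (F₀ z : EReal) + I₀ z := fun z => hm ▸ iInf_le _ z
  rw [hm]
  have hlsc' : LowerSemicontinuous (fun y => I₀ y + (F₀ y : EReal) - (m : EReal)) := by
    intro x a ha
    obtain ⟨c, hac, hc⟩ := EReal.lt_iff_exists_real_btwn.1 ha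
    rw [lt_rate_iff (hpos x)] at hc
    have h1 : ((c + m - F₀ x : ℝ) : EReal) < I₀ x := by
      have := hpos x
      generalize I₀ x = i at *
      induction i with
      | bot => simp at this
      | top => exact EReal.coe_lt_top _
      | coe r => norm_cast at *; linarith
    obtain ⟨b, hb1, hb2⟩ := EReal.lt_iff_exists_real_btwn.1 h1
    norm_cast at hb1
    have h2 : ∀ᶠ y in 𝓝 x, c + m - b < F₀ y :=
      hF₀.continuousAt.eventually (lt_mem_nhds (by linarith))
    filter_upwards [hlsc x _ hb2, h2] with y hy1 hy2
    refine hac.trans ?_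
    rw [lt_rate_iff (hpos y)]
    generalize I₀ y = i at *
    induction i with
    | bot => simp at hy1
    | top => simpa [← EReal.coe_add] using EReal.coe_lt_top _
    | coe r => norm_cast at *; linarith
  refine ⟨?_, hlsc', ?_, ?_, ?_⟩
  · intro x
    by_contra! h
    have h' := (rate_lt_iff (hpos x) (F₀ x) m 0).1 (by simpa using h)
    rw [zero_add] at h'
    exact absurd (hle x) (not_le.2 h')
  · intro c
    refine (hcpt (2 * (c + m) + C)).of_isClosed_subset (hlsc'.isClosed_preimage _) ?_
    intro x hx
    have h1 : I₀ x + (F₀ x : EReal) - (m : EReal) ≤ c := hx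
    have h2 := hg x
    have h3 := hpos x
    show I₀ x ≤ _
    generalize I₀ x = i at *
    induction i with
    | bot => simp at h3
    | top => simp at h1
    | coe r => norm_cast at *; linarith
  · intro F hF
    rw [← EReal.le_of_forall_lt_iff_le]
    intro c hc
    rw [← EReal.le_of_forall_lt_iff_le]
    intro c' hc'
    norm_cast at hc'
    obtain ⟨δ, hδ, hδc⟩ : ∃ δ : ℝ, 0 < δ ∧ c + 2 * δ = c' := ⟨(c' - c) / 2, by linarith, by ring⟩
    have hF1 : ∀ x ∈ F, ((-(c - m) : ℝ) : EReal) < (F₀ x : EReal) + I₀ x := by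
      intro x hx
      have h1 : ((-c : ℝ) : EReal) < I₀ x + (F₀ x : EReal) - (m : EReal) := by
        refine lt_of_lt_of_le ?_
          (iInf₂_le (f := fun x (_ : x ∈ F) => I₀ x + (F₀ x : EReal) - (m : EReal)) x hx)
        rw [EReal.coe_neg]
        exact EReal.neg_lt_comm.1 hc
      rw [lt_rate_iff (hpos x)] at h1
      convert h1 using 2
      ring
    have hZ : ∃ x, (F₀ x : EReal) + I₀ x < ((m + δ : ℝ) : EReal) := by
      rw [← iInf_lt_iff, hm]
      norm_cast
      linarith
    obtain ⟨x, hx⟩ := hZ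
    apply limsup_le_of_le
    · isBoundedDefault
    filter_upwards [ev_pos, hupper F hF _ hF1 δ hδ,
      hlower univ isOpen_univ x (mem_univ _) _ hx] with ε h0 h1 h2
    apply scaled_le_of_le h0
    rw [hμ ε h0 F hF.measurableSet]
    rw [Measure.restrict_univ] at h2
    apply ENNReal.div_le_of_le_mul
    calc _ ≤ _ := h1
      _ = P c' ε * P (-(m + δ)) ε := by rw [← P_add]; congr 1; linarith
      _ ≤ _ := by gcongr
  · intro G hG
    rw [← EReal.ge_of_forall_gt_iff_ge]
    intro c hc
    rw [← EReal.ge_of_forall_gt_iff_ge]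
    intro c' hc'
    norm_cast at hc'
    obtain ⟨δ, hδ, hδc⟩ : ∃ δ : ℝ, 0 < δ ∧ c' + 2 * δ = c := ⟨(c - c') / 2, by linarith, by ring⟩
    have hc2 : ⨅ x ∈ G, (I₀ x + (F₀ x : EReal) - (m : EReal)) < ((-c : ℝ) : EReal) := by
      rw [EReal.coe_neg]
      exact EReal.lt_neg_comm.1 hc
    obtain ⟨x, hx⟩ := iInf_lt_iff.1 hc2
    obtain ⟨hxG, hx⟩ := iInf_lt_iff.1 hx
    rw [rate_lt_iff (hpos x)] at hx
    have hF1 : ∀ x ∈ univ, ((-(-m + δ) : ℝ) : EReal) < (F₀ x : EReal) + I₀ x := by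
      intro x _
      refine lt_of_lt_of_le ?_ (hle x)
      norm_cast
      linarith
    apply le_liminf_of_le
    · isBoundedDefault
    filter_upwards [ev_pos, hupper univ isClosed_univ _ hF1 δ hδ,
      hlower G hG x hxG _ hx] with ε h0 h1 h2
    apply le_scaled_of_le h0
    rw [hμ ε h0 G hG.measurableSet]
    rw [Measure.restrict_univ] at h1
    calc P c' ε = P (-(-c + m)) ε / P (-m + δ + δ) ε := by
          rw [ENNReal.eq_div_iff (P_pos _ _).ne' (P_ne_top _ _), ← P_add]
          congr 1
          linarith
      _ ≤ _ := ENNReal.div_le_div h2 h1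

end

end Tilt

/-- **ε-dependent tilting lemma.** Tilting an exponentially tight family `(μ₀ ε)` satisfying
an LDP with good rate `I₀` by the densities `exp (−Fε/ε²)` (normalized), where the tilt
`Fε = F₀ + ε F₁ + ⋯ + ε^{n−1}/(n−1)! F_{n−1} + εⁿ Rₙ(ε,·)` may depend on `ε`, yields an LDP
with rate `I = I₀ + F₀ − inf (F₀ + I₀)`: only the leading term `F₀` survives. -/
theorem ldp_tilting_eps_dependent
    {B : Type*} [NormedAddCommGroup B] [NormedSpace ℝ B] [CompleteSpace B]
    [MeasurableSpace B] [BorelSpace B]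
    (μ₀ : ℝ → Measure B) (hprob : ∀ ε, 0 < ε → IsProbabilityMeasure (μ₀ ε))
    (htight₀ : ExpTight μ₀)
    (I₀ : B → EReal) (hLDP₀ : HasLDP μ₀ I₀)
    (n : ℕ) (hn : 1 ≤ n)
    (Fs : ℕ → B → ℝ) (R : ℝ → B → ℝ) (Fe : ℝ → B → ℝ)
    (hmeasFs : ∀ i, Measurable (Fs i)) (hmeasR : ∀ ε, Measurable (R ε))
    (hexp : ∀ ε : ℝ, 0 < ε → ∀ y : B,
      Fe ε y = (∑ i ∈ Finset.range n, ε ^ i / (Nat.factorial i) * Fs i y) + ε ^ n * R ε y)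
    (hF₀ : Continuous (Fs 0))
    (hR : ∀ y : B, Tendsto (fun ε : ℝ => R ε y) (𝓝[>] (0 : ℝ)) (𝓝 0))
    (hmom : ∀ i < n, ∀ γ : ℝ, 0 < γ →
      Filter.limsup (fun ε : ℝ => ((ε ^ 2 : ℝ) : EReal) *
          ENNReal.log (∫⁻ y, ENNReal.ofReal
            (Real.exp (γ * max |Fs i y| |R ε y| / ε ^ 2)) ∂(μ₀ ε)))
        (𝓝[>] (0 : ℝ)) < (⊤ : EReal))
    (hZ : ∀ ε : ℝ, 0 < ε →
      0 < ∫⁻ y, ENNReal.ofReal (Real.exp (-Fe ε y / ε ^ 2)) ∂(μ₀ ε) ∧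
      ∫⁻ y, ENNReal.ofReal (Real.exp (-Fe ε y / ε ^ 2)) ∂(μ₀ ε) < ⊤)
    (μ : ℝ → Measure B)
    (hμ : ∀ ε : ℝ, 0 < ε → ∀ A : Set B, MeasurableSet A →
      μ ε A = (∫⁻ y in A, ENNReal.ofReal (Real.exp (-Fe ε y / ε ^ 2)) ∂(μ₀ ε)) /
        (∫⁻ y, ENNReal.ofReal (Real.exp (-Fe ε y / ε ^ 2)) ∂(μ₀ ε)))
    (htight : ExpTight μ) :
    HasLDP μ (fun y => I₀ y + (Fs 0 y : EReal) - ⨅ z : B, ((Fs 0 z : EReal) + I₀ z)) := by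
  set M : ℕ → ℝ → B → ℝ := fun i ε y => max |Fs i y| |R ε y| with hMdef
  have hMm : ∀ i ε, Measurable (M i ε) := by
    intro i ε
    have h1 := hmeasFs i
    have h2 := hmeasR ε
    exact Measurable.max (by fun_prop) (by fun_prop)
  have hM0 : ∀ i ε y, 0 ≤ M i ε y := fun i ε y => (abs_nonneg _).trans (le_max_left _ _)
  obtain ⟨C, hC⟩ := Tilt.moment μ₀ n hn M hMm hmom 4 (by norm_num)
  obtain ⟨C', hC'⟩ := Tilt.moment μ₀ n hn M hMm hmom 8 (by norm_num)
  have hmem : 0 ∈ Finset.range n := Finset.mem_range.2 hn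
  have hMle : ∀ i ∈ Finset.range n, ∀ ε y, M i ε y ≤ ∑ i ∈ Finset.range n, M i ε y :=
    fun i hi ε y => Finset.single_le_sum (f := fun i => M i ε y) (fun j _ => hM0 j ε y) hi
  have hF0S : ∀ ε y, |Fs 0 y| ≤ ∑ i ∈ Finset.range n, M i ε y :=
    fun ε y => (le_max_left _ _).trans (hMle 0 hmem ε y)
  have hRS : ∀ ε y, |R ε y| ≤ ∑ i ∈ Finset.range n, M i ε y :=
    fun ε y => (le_max_right _ _).trans (hMle 0 hmem ε y)
  have hcoef : ∀ ε : ℝ, 0 < ε → ε ≤ 1 → ∀ i : ℕ, ε ^ i / (Nat.factorial i) ≤ ε ^ i := by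
    intro ε h0 h1 i
    apply div_le_self (by positivity)
    exact_mod_cast Nat.one_le_iff_ne_zero.2 (Nat.factorial_ne_zero i)
  refine Tilt.final μ₀ hprob htight₀ I₀ hLDP₀ (Fs 0) hF₀ Fe
    (fun ε y => 2 * ∑ i ∈ Finset.range n, M i ε y) C C' ?_ ?_ ?_ ?_ ?_ ?_ μ hμ
  · intro ε
    exact (Finset.measurable_fun_sum _ fun i _ => hMm i ε).const_mul 2
  · intro ε h0 h1 y
    have := hF0S ε y
    have := abs_nonneg (Fs 0 y)
    linarith
  · intro ε h0 h1 y
    rw [hexp ε h0 y]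
    refine (abs_add_le _ _).trans ?_
    have e1 : |∑ i ∈ Finset.range n, ε ^ i / (Nat.factorial i) * Fs i y|
        ≤ ∑ i ∈ Finset.range n, M i ε y := by
      refine (Finset.abs_sum_le_sum_abs _ _).trans (Finset.sum_le_sum fun i _ => ?_)
      rw [abs_mul, abs_of_nonneg (by positivity)]
      calc _ ≤ 1 * |Fs i y| := by
            gcongr
            exact (hcoef ε h0 h1 i).trans (pow_le_one₀ h0.le h1)
        _ ≤ _ := by rw [one_mul]; exact le_max_left _ _
    have e2 : |ε ^ n * R ε y| ≤ ∑ i ∈ Finset.range n, M i ε y := by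
      rw [abs_mul, abs_of_nonneg (by positivity)]
      calc _ ≤ 1 * |R ε y| := by
            gcongr
            exact pow_le_one₀ h0.le h1
        _ ≤ _ := by rw [one_mul]; exact hRS ε y
    linarith
  · intro ε h0 h1 y
    have hpow : ∀ i : ℕ, 1 ≤ i → ε ^ i ≤ ε := fun i hi =>
      pow_le_of_le_one h0.le h1 (by omega)
    obtain ⟨k, rfl⟩ : ∃ k, n = k + 1 := ⟨n - 1, by omega⟩
    have e0 : Fe ε y - Fs 0 y = (∑ i ∈ Finset.range k,
        ε ^ (i + 1) / (Nat.factorial (i + 1)) * Fs (i + 1) y) + ε ^ (k + 1) * R ε y := by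
      rw [hexp ε h0 y, Finset.sum_range_succ']
      simp
      ring
    rw [e0]
    refine (abs_add_le _ _).trans ?_
    have e1 : |∑ i ∈ Finset.range k, ε ^ (i + 1) / (Nat.factorial (i + 1)) * Fs (i + 1) y|
        ≤ ε * ∑ i ∈ Finset.range (k + 1), M i ε y := by
      rw [Finset.sum_range_succ', mul_add, Finset.mul_sum]
      have := mul_nonneg h0.le (hM0 0 ε y)
      refine le_trans ?_ (le_add_of_nonneg_right this)
      refine (Finset.abs_sum_le_sum_abs _ _).trans (Finset.sum_le_sum fun i _ => ?_)
      rw [abs_mul, abs_of_nonneg (by positivity)]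
      gcongr
      · exact (hcoef ε h0 h1 _).trans (hpow _ (by omega))
      · exact le_max_left _ _
    have e2 : |ε ^ (k + 1) * R ε y| ≤ ε * ∑ i ∈ Finset.range (k + 1), M i ε y := by
      rw [abs_mul, abs_of_nonneg (by positivity)]
      gcongr
      · exact hpow _ (by omega)
      · exact hRS ε y
    linarith
  · filter_upwards [hC] with ε h
    convert h using 4
    ring
  · filter_upwards [hC'] with ε h
    convert h using 4
    ring
end

section
/- Laplace asymptotics are governed by the leading term of the tilt: Let B be a Banach space and (μ₀^ε)_{ε>0} a family of Borel probability measures on B satisfying the LDP with speed ε² and good rate function I₀. For ε > 0 let F^ε : B → ℝ admit the expansion F^ε(y) = F₀(y) + ε F₁(y) + (ε²/2) F₂(y) + ⋯ + (ε^{n−1}/(n−1)!) F_{n−1}(y) + εⁿ R_n(ε, y), where F₀ is continuous, lim_{ε→0⁺} R_n(ε, y) = 0 for every y, and for every index 0 ≤ i ≤ n−1 and every γ > 0, limsup_{ε→0⁺} ε² log ∫_B exp( γ max{ |F_i(y)|, |R_n(ε, y)| } / ε² ) dμ₀^ε(y) < ∞. Then for every bounded continuous function φ : B → ℝ, lim_{ε→0⁺}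 ε² [ log ∫_B exp( −(φ(y) + F^ε(y))/ε² ) dμ₀^ε(y) − log ∫_B exp( −(φ(y) + F₀(y))/ε² ) dμ₀^ε(y) ] = 0. -/
open MeasureTheory Filter Metric Set Topology

/-- A finite upper limit at speed `ε²` gives an eventual exponential bound. -/
lemma aux_moment_bound (J : ℝ → ENNReal)
    (h : Filter.limsup (fun ε : ℝ => ((ε ^ 2 : ℝ) : EReal) * ENNReal.log (J ε))
      (𝓝[>] (0 : ℝ)) < (⊤ : EReal)) :
    ∃ C : ℝ, ∀ᶠ ε in 𝓝[>] (0 : ℝ), J ε ≤ ENNReal.ofReal (Real.exp (C / ε ^ 2)) := by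
  obtain ⟨C, hC1, hC2⟩ := EReal.lt_iff_exists_real_btwn.1 h
  refine ⟨C, ?_⟩
  have h1 := Filter.eventually_lt_of_limsup_lt hC1
  filter_upwards [h1, self_mem_nhdsWithin] with ε hε hpos
  have hpos : (0 : ℝ) < ε := hpos
  have h2 : (0 : ℝ) < ε ^ 2 := by positivity
  rcases eq_or_ne (J ε) 0 with h0 | h0
  · rw [h0]; exact zero_le
  rcases eq_or_ne (J ε) ⊤ with ht | ht
  · rw [ht, ENNReal.log_top, EReal.coe_mul_top_of_pos h2] at hε
    exact absurd hε (by simp)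
  · have hz : 0 < (J ε).toReal := ENNReal.toReal_pos h0 ht
    have hlog : ENNReal.log (J ε) = ((Real.log (J ε).toReal : ℝ) : EReal) :=
      ENNReal.log_pos_real h0 ht
    rw [hlog, ← EReal.coe_mul, EReal.coe_lt_coe_iff] at hε
    rw [ENNReal.le_ofReal_iff_toReal_le ht (Real.exp_pos _).le]
    rw [← Real.log_le_iff_le_exp hz, le_div_iff₀ h2]
    linarith

/-- One-sided comparison of exponential integrals. -/
lemma aux_compare {B : Type*} [MeasurableSpace B] (μ : Measure B)
    (U V H : B → ℝ) (hU : Measurable U) (hH : Measurable H)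
    (M C ε δ : ℝ) (hε : 0 < ε)
    (hV2 : ∀ y, |V y| ≤ M + 2 * H y) (hUV : ∀ y, |U y - V y| ≤ ε * H y)
    (hint : ∫⁻ y, ENNReal.ofReal (Real.exp (3 * H y / ε ^ 2)) ∂μ
      ≤ ENNReal.ofReal (Real.exp (C / ε ^ 2))) :
    ∫⁻ y, ENNReal.ofReal (Real.exp (-(V y) / ε ^ 2)) ∂μ ≤
      ENNReal.ofReal (Real.exp (δ / ε ^ 2)) *
        ∫⁻ y, ENNReal.ofReal (Real.exp (-(U y) / ε ^ 2)) ∂μ +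
      ENNReal.ofReal (Real.exp ((M + C - δ / ε) / ε ^ 2)) := by
  have h2 : (0 : ℝ) < ε ^ 2 := by positivity
  have hpt : ∀ y, ENNReal.ofReal (Real.exp (-(V y) / ε ^ 2)) ≤
      ENNReal.ofReal (Real.exp (δ / ε ^ 2)) * ENNReal.ofReal (Real.exp (-(U y) / ε ^ 2)) +
      ENNReal.ofReal (Real.exp ((M - δ / ε) / ε ^ 2)) *
        ENNReal.ofReal (Real.exp (3 * H y / ε ^ 2)) := by
    intro y
    rw [← ENNReal.ofReal_mul (Real.exp_pos _).le, ← ENNReal.ofReal_mul (Real.exp_pos _).le,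
      ← Real.exp_add, ← Real.exp_add, ← add_div, ← add_div]
    rcases le_or_gt (ε * H y) δ with hc | hc
    · refine le_trans (ENNReal.ofReal_le_ofReal (Real.exp_le_exp.2 ?_)) le_self_add
      apply div_le_div_of_nonneg_right _ h2.le
      have := (abs_le.1 (hUV y)).2
      linarith
    · refine le_trans (ENNReal.ofReal_le_ofReal (Real.exp_le_exp.2 ?_)) le_add_self
      apply div_le_div_of_nonneg_right _ h2.le
      have h3 : δ / ε < H y := by rw [div_lt_iff₀ hε]; linarith
      have := (abs_le.1 (hV2 y)).1
      linarith
  refine (lintegral_mono hpt).trans ?_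
  rw [lintegral_add_left (by fun_prop), lintegral_const_mul _ (by fun_prop),
    lintegral_const_mul _ (by fun_prop)]
  gcongr
  calc _ ≤ ENNReal.ofReal (Real.exp ((M - δ / ε) / ε ^ 2)) *
        ENNReal.ofReal (Real.exp (C / ε ^ 2)) := by gcongr
    _ = _ := by
      rw [← ENNReal.ofReal_mul (Real.exp_pos _).le, ← Real.exp_add, ← add_div]
      congr 3; ring

/-- Upper bound. -/
lemma aux_upper_s8 {B : Type*} [MeasurableSpace B] (μ : Measure B)
    (V H : B → ℝ) (M C ε : ℝ) (hε : 0 < ε) (hH0 : ∀ y, 0 ≤ H y) (hH : Measurable H)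
    (hV2 : ∀ y, |V y| ≤ M + 2 * H y)
    (hint : ∫⁻ y, ENNReal.ofReal (Real.exp (3 * H y / ε ^ 2)) ∂μ
      ≤ ENNReal.ofReal (Real.exp (C / ε ^ 2))) :
    ∫⁻ y, ENNReal.ofReal (Real.exp (V y / ε ^ 2)) ∂μ ≤
      ENNReal.ofReal (Real.exp ((M + C) / ε ^ 2)) := by
  have h2 : (0 : ℝ) < ε ^ 2 := by positivity
  have hpt : ∀ y, ENNReal.ofReal (Real.exp (V y / ε ^ 2)) ≤
      ENNReal.ofReal (Real.exp (M / ε ^ 2)) * ENNReal.ofReal (Real.exp (3 * H y / ε ^ 2)) := by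
    intro y
    rw [← ENNReal.ofReal_mul (Real.exp_pos _).le, ← Real.exp_add, ← add_div]
    refine ENNReal.ofReal_le_ofReal (Real.exp_le_exp.2 ?_)
    apply div_le_div_of_nonneg_right _ h2.le
    have := (abs_le.1 (hV2 y)).2
    linarith [hH0 y]
  refine (lintegral_mono hpt).trans ?_
  rw [lintegral_const_mul _ (by fun_prop), add_div, Real.exp_add,
    ENNReal.ofReal_mul (Real.exp_pos _).le]
  gcongr

/-- Lower bound. -/
lemma aux_lower_s8 {B : Type*} [MeasurableSpace B] (μ : Measure B) [IsProbabilityMeasure μ]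
    (V : B → ℝ) (hV : Measurable V) (K : ℝ)
    (hint : ∫⁻ y, ENNReal.ofReal (Real.exp (V y)) ∂μ ≤ ENNReal.ofReal (Real.exp K)) :
    ENNReal.ofReal (Real.exp (-K)) ≤ ∫⁻ y, ENNReal.ofReal (Real.exp (-(V y))) ∂μ := by
  set a := Real.exp (-K) with ha
  have hapos : 0 < a := Real.exp_pos _
  have hpt : ∀ y, ENNReal.ofReal (2 * a) ≤ ENNReal.ofReal (Real.exp (-(V y))) +
      ENNReal.ofReal (a ^ 2) * ENNReal.ofReal (Real.exp (V y)) := by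
    intro y
    rw [← ENNReal.ofReal_mul (by positivity), ← ENNReal.ofReal_add (by positivity) (by positivity)]
    apply ENNReal.ofReal_le_ofReal
    rw [Real.exp_neg]
    have ht : 0 < Real.exp (V y) := Real.exp_pos _
    set t := Real.exp (V y)
    have h1 : t⁻¹ + a ^ 2 * t - 2 * a = t⁻¹ * (1 - a * t) ^ 2 := by field_simp; ring
    have h2 : 0 ≤ t⁻¹ * (1 - a * t) ^ 2 := by positivity
    linarith
  have h := lintegral_mono (μ := μ) hpt
  rw [lintegral_const, measure_univ, mul_one, lintegral_add_left (by fun_prop),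
    lintegral_const_mul _ (by fun_prop)] at h
  have h3 : ENNReal.ofReal (a ^ 2) * ∫⁻ y, ENNReal.ofReal (Real.exp (V y)) ∂μ
      ≤ ENNReal.ofReal a := by
    calc _ ≤ ENNReal.ofReal (a ^ 2) * ENNReal.ofReal (Real.exp K) := by gcongr
      _ = ENNReal.ofReal a := by
        rw [← ENNReal.ofReal_mul (by positivity)]
        congr 1
        rw [pow_two, mul_assoc, ha, ← Real.exp_add (-K) K]
        simp
  have h4 : ENNReal.ofReal a + ENNReal.ofReal a ≤
      (∫⁻ y, ENNReal.ofReal (Real.exp (-(V y))) ∂μ) + ENNReal.ofReal a := by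
    rw [← ENNReal.ofReal_add hapos.le hapos.le, ← two_mul]
    exact h.trans (by gcongr)
  exact (ENNReal.add_le_add_iff_right ENNReal.ofReal_ne_top).1 h4

/-- Logarithmic form of the one-sided comparison. -/
lemma aux_log_s8 (zU zV M C ε δ : ℝ) (hε : 0 < ε) (hzV : 0 < zV)
    (hlow : Real.exp (-((M + C) / ε ^ 2)) ≤ zU)
    (hcmp : zV ≤ Real.exp (δ / ε ^ 2) * zU + Real.exp ((M + C - δ / ε) / ε ^ 2))
    (hδ : 0 < δ) (hsmall : 2 * (M + C) ≤ δ / ε) (hsmall2 : ε ^ 2 < δ) :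
    ε ^ 2 * (Real.log zV - Real.log zU) < 2 * δ := by
  have h2 : (0 : ℝ) < ε ^ 2 := by positivity
  have hzU : 0 < zU := lt_of_lt_of_le (Real.exp_pos _) hlow
  have h1 : Real.exp ((M + C - δ / ε) / ε ^ 2) ≤ Real.exp (δ / ε ^ 2) * zU := by
    refine le_trans ?_ (mul_le_mul_of_nonneg_left hlow (Real.exp_pos _).le)
    rw [← Real.exp_add, ← neg_div, ← add_div]
    apply Real.exp_le_exp.2
    apply div_le_div_of_nonneg_right _ h2.le
    linarith
  have h3 : zV ≤ 2 * (Real.exp (δ / ε ^ 2) * zU) := by linarith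
  have h4 := Real.log_le_log hzV h3
  rw [Real.log_mul (by norm_num) (by positivity), Real.log_mul (by positivity) hzU.ne',
    Real.log_exp] at h4
  have h5 : Real.log 2 < 1 := by linarith [Real.log_two_lt_d9]
  have h6 : Real.log zV - Real.log zU ≤ Real.log 2 + δ / ε ^ 2 := by linarith
  have h7 := mul_le_mul_of_nonneg_left h6 h2.le
  have h8 : ε ^ 2 * (Real.log 2 + δ / ε ^ 2) = ε ^ 2 * Real.log 2 + δ := by field_simp
  nlinarith

/-- **Laplace asymptotics are governed by the leading term of the tilt.** If
`Fε = F₀ + ε F₁ + ⋯ + ε^{n−1}/(n−1)! F_{n−1} + εⁿ Rₙ(ε,·)` with suitable exponential moment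
bounds, then for every bounded continuous `φ` the exponential integrals against `φ + Fε` and
against `φ + F₀` have the same logarithmic asymptotics at speed `ε²`. -/
theorem laplace_asymptotics_leading_term
    {B : Type*} [NormedAddCommGroup B] [NormedSpace ℝ B] [CompleteSpace B]
    [MeasurableSpace B] [BorelSpace B]
    (μ₀ : ℝ → Measure B) (hprob : ∀ ε, 0 < ε → IsProbabilityMeasure (μ₀ ε))
    (I₀ : B → EReal) (hLDP₀ : HasLDP μ₀ I₀)
    (n : ℕ) (hn : 1 ≤ n)
    (Fs : ℕ → B → ℝ) (R : ℝ → B → ℝ) (Fe : ℝ → B → ℝ)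
    (hmeasFs : ∀ i, Measurable (Fs i)) (hmeasR : ∀ ε, Measurable (R ε))
    (hexp : ∀ ε : ℝ, 0 < ε → ∀ y : B,
      Fe ε y = (∑ i ∈ Finset.range n, ε ^ i / (Nat.factorial i) * Fs i y) + ε ^ n * R ε y)
    (hF₀ : Continuous (Fs 0))
    (hR : ∀ y : B, Tendsto (fun ε : ℝ => R ε y) (𝓝[>] (0 : ℝ)) (𝓝 0))
    (hmom : ∀ i < n, ∀ γ : ℝ, 0 < γ →
      Filter.limsup (fun ε : ℝ => ((ε ^ 2 : ℝ) : EReal) *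
          ENNReal.log (∫⁻ y, ENNReal.ofReal
            (Real.exp (γ * max |Fs i y| |R ε y| / ε ^ 2)) ∂(μ₀ ε)))
        (𝓝[>] (0 : ℝ)) < (⊤ : EReal))
    (φ : B → ℝ) (hφcont : Continuous φ) (hφbdd : ∃ M : ℝ, ∀ y, |φ y| ≤ M) :
    Tendsto
      (fun ε : ℝ => ((ε ^ 2 : ℝ) : EReal) *
        (ENNReal.log (∫⁻ y, ENNReal.ofReal (Real.exp (-(φ y + Fe ε y) / ε ^ 2)) ∂(μ₀ ε)) -
          ENNReal.log (∫⁻ y, ENNReal.ofReal (Real.exp (-(φ y + Fs 0 y) / ε ^ 2)) ∂(μ₀ ε))))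
      (𝓝[>] (0 : ℝ)) (𝓝 (0 : EReal)) := by
  obtain ⟨M, hM⟩ := hφbdd
  have hn0 : (0 : ℝ) < n := by exact_mod_cast hn
  -- the dominating function
  set m : ℕ → ℝ → B → ℝ := fun i ε y => max |Fs i y| |R ε y| with hm
  set H : ℝ → B → ℝ := fun ε y => ∑ i ∈ Finset.range n, 2 * m i ε y with hHdef
  have hm0 : ∀ i ε y, 0 ≤ m i ε y := fun i ε y => le_max_of_le_left (abs_nonneg _)
  have hH0 : ∀ ε y, 0 ≤ H ε y := fun ε y =>
    Finset.sum_nonneg fun i _ => mul_nonneg (by norm_num) (hm0 i ε y)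
  have hmmeas : ∀ i ε, Measurable (m i ε) := by
    intro i ε
    have h1 := hmeasFs i
    have h2 := hmeasR ε
    exact (h1.abs).max (h2.abs)
  have hHmeas : ∀ ε, Measurable (H ε) := by
    intro ε
    exact Finset.measurable_fun_sum _ fun i _ => (hmmeas i ε).const_mul 2
  -- moment bound
  have hmomH : ∃ C : ℝ, ∀ᶠ ε in 𝓝[>] (0 : ℝ),
      ∫⁻ y, ENNReal.ofReal (Real.exp (3 * H ε y / ε ^ 2)) ∂(μ₀ ε)
        ≤ ENNReal.ofReal (Real.exp (C / ε ^ 2)) := by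
    have h1 : ∀ i, ∃ C : ℝ, i < n → ∀ᶠ ε in 𝓝[>] (0 : ℝ),
        ∫⁻ y, ENNReal.ofReal (Real.exp ((6 * n) * m i ε y / ε ^ 2)) ∂(μ₀ ε)
          ≤ ENNReal.ofReal (Real.exp (C / ε ^ 2)) := by
      intro i
      by_cases hi : i < n
      · obtain ⟨C, hC⟩ := aux_moment_bound _ (hmom i hi (6 * n) (by positivity))
        exact ⟨C, fun _ => hC⟩
      · exact ⟨0, fun h => absurd h hi⟩
    choose C hC using h1
    refine ⟨(∑ i ∈ Finset.range n, |C i|) + n, ?_⟩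
    have hall : ∀ᶠ ε in 𝓝[>] (0 : ℝ), ∀ i ∈ Finset.range n,
        ∫⁻ y, ENNReal.ofReal (Real.exp ((6 * n) * m i ε y / ε ^ 2)) ∂(μ₀ ε)
          ≤ ENNReal.ofReal (Real.exp (C i / ε ^ 2)) :=
      (Filter.eventually_all_finset _).2 fun i hi => hC i (Finset.mem_range.1 hi)
    filter_upwards [hall, Ioo_mem_nhdsGT (zero_lt_one' ℝ)] with ε hε hε1
    have hpos : 0 < ε := hε1.1
    have h2 : (0 : ℝ) < ε ^ 2 := by positivity
    have h21 : ε ^ 2 ≤ 1 := pow_le_one₀ hpos.le hε1.2.le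
    have hpt : ∀ y, ENNReal.ofReal (Real.exp (3 * H ε y / ε ^ 2)) ≤
        ∑ i ∈ Finset.range n, ENNReal.ofReal (Real.exp ((6 * n) * m i ε y / ε ^ 2)) := by
      intro y
      obtain ⟨i, hi, hmax⟩ := Finset.exists_max_image (Finset.range n) (fun i => m i ε y)
        ⟨0, Finset.mem_range.2 hn⟩
      refine le_trans ?_ (Finset.single_le_sum
        (f := fun i => ENNReal.ofReal (Real.exp ((6 * n) * m i ε y / ε ^ 2)))
        (fun _ _ => zero_le) hi)
      refine ENNReal.ofReal_le_ofReal (Real.exp_le_exp.2 ?_)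
      apply div_le_div_of_nonneg_right _ h2.le
      have h3 : H ε y ≤ n * (2 * m i ε y) := by
        have := Finset.sum_le_card_nsmul (Finset.range n) (fun i => 2 * m i ε y) (2 * m i ε y)
          (fun j hj => by have := hmax j hj; linarith)
        simpa using this
      linarith
    refine (lintegral_mono hpt).trans ?_
    rw [lintegral_finsetSum _ (fun i _ => by have := hmmeas i ε; fun_prop)]
    calc _ ≤ ∑ i ∈ Finset.range n, ENNReal.ofReal (Real.exp (C i / ε ^ 2)) :=
          Finset.sum_le_sum hε
      _ ≤ ∑ i ∈ Finset.range n,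
          ENNReal.ofReal (Real.exp ((∑ i ∈ Finset.range n, |C i|) / ε ^ 2)) := by
        refine Finset.sum_le_sum fun i hi => ENNReal.ofReal_le_ofReal (Real.exp_le_exp.2 ?_)
        apply div_le_div_of_nonneg_right _ h2.le
        exact (le_abs_self _).trans
          (Finset.single_le_sum (f := fun i => |C i|) (fun _ _ => abs_nonneg _) hi)
      _ = ENNReal.ofReal (n * Real.exp ((∑ i ∈ Finset.range n, |C i|) / ε ^ 2)) := by
        rw [Finset.sum_const, Finset.card_range, nsmul_eq_mul, ENNReal.ofReal_mul hn0.le,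
          ENNReal.ofReal_natCast]
      _ ≤ _ := by
        apply ENNReal.ofReal_le_ofReal
        rw [add_div, Real.exp_add, mul_comm]
        gcongr
        have h4 : (n : ℝ) ≤ n / ε ^ 2 := by
          rw [le_div_iff₀ h2]; nlinarith
        linarith [Real.add_one_le_exp ((n : ℝ) / ε ^ 2)]
  obtain ⟨C, hC⟩ := hmomH
  -- pointwise bounds
  have hdiff : ∀ ε, 0 < ε → ε < 1 → ∀ y, |Fe ε y - Fs 0 y| ≤ ε * H ε y := by
    intro ε hpos h1 y
    obtain ⟨k, rfl⟩ : ∃ k, n = k + 1 := ⟨n - 1, by omega⟩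
    rw [hexp ε hpos y, Finset.sum_range_succ']
    have e1 : (∑ i ∈ Finset.range k, ε ^ (i + 1) / ((i + 1).factorial : ℝ) * Fs (i + 1) y +
        ε ^ 0 / (Nat.factorial 0 : ℝ) * Fs 0 y) + ε ^ (k + 1) * R ε y - Fs 0 y =
        ∑ i ∈ Finset.range k, ε ^ (i + 1) / ((i + 1).factorial : ℝ) * Fs (i + 1) y +
          ε ^ (k + 1) * R ε y := by simp; ring
    rw [e1]
    have hpw : ∀ i : ℕ, ε ^ (i + 1) ≤ ε := fun i => by
      rw [pow_succ]
      exact mul_le_of_le_one_left hpos.le (pow_le_one₀ hpos.le h1.le)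
    have b1 : |∑ i ∈ Finset.range k, ε ^ (i + 1) / ((i + 1).factorial : ℝ) * Fs (i + 1) y|
        ≤ ∑ i ∈ Finset.range k, ε * (2 * m (i + 1) ε y) := by
      refine (Finset.abs_sum_le_sum_abs _ _).trans (Finset.sum_le_sum fun i _ => ?_)
      rw [abs_mul, abs_of_nonneg (by positivity)]
      have hf : (1 : ℝ) ≤ (i + 1).factorial := by exact_mod_cast Nat.factorial_pos _
      have c1 : ε ^ (i + 1) / ((i + 1).factorial : ℝ) ≤ ε :=
        (div_le_self (by positivity) hf).trans (hpw i)
      have c2 : |Fs (i + 1) y| ≤ 2 * m (i + 1) ε y := by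
        have : |Fs (i + 1) y| ≤ m (i + 1) ε y := le_max_left _ _
        linarith [hm0 (i + 1) ε y]
      gcongr
    have b2 : |ε ^ (k + 1) * R ε y| ≤ ε * (2 * m 0 ε y) := by
      rw [abs_mul, abs_of_nonneg (by positivity)]
      have c2 : |R ε y| ≤ 2 * m 0 ε y := by
        have : |R ε y| ≤ m 0 ε y := le_max_right _ _
        linarith [hm0 0 ε y]
      have c1 := hpw k
      gcongr
    have e2 : ε * H ε y = ∑ i ∈ Finset.range k, ε * (2 * m (i + 1) ε y) + ε * (2 * m 0 ε y) := by
      simp only [hHdef]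
      rw [Finset.sum_range_succ', mul_add, Finset.mul_sum]
    rw [e2]
    exact (abs_add_le _ _).trans (add_le_add b1 b2)
  have hF0H : ∀ ε y, |Fs 0 y| ≤ H ε y := by
    intro ε y
    have a1 : |Fs 0 y| ≤ m 0 ε y := le_max_left _ _
    have a2 := Finset.single_le_sum (f := fun i => 2 * m i ε y)
      (fun i _ => mul_nonneg (by norm_num) (hm0 i ε y)) (Finset.mem_range.2 hn)
    have a3 : 2 * m 0 ε y ≤ H ε y := a2
    linarith [hm0 0 ε y]
  -- abbreviations
  set ZV : ℝ → ENNReal := fun ε =>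
    ∫⁻ y, ENNReal.ofReal (Real.exp (-(φ y + Fe ε y) / ε ^ 2)) ∂(μ₀ ε) with hZV
  set ZU : ℝ → ENNReal := fun ε =>
    ∫⁻ y, ENNReal.ofReal (Real.exp (-(φ y + Fs 0 y) / ε ^ 2)) ∂(μ₀ ε) with hZU
  -- real facts
  have key : ∀ᶠ ε in 𝓝[>] (0 : ℝ), 0 < ε ∧ ZU ε ≠ ⊤ ∧ ZV ε ≠ ⊤ ∧
      Real.exp (-((M + C) / ε ^ 2)) ≤ (ZU ε).toReal ∧
      Real.exp (-((M + C) / ε ^ 2)) ≤ (ZV ε).toReal ∧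
      ∀ δ : ℝ,
        (ZV ε).toReal ≤ Real.exp (δ / ε ^ 2) * (ZU ε).toReal
          + Real.exp ((M + C - δ / ε) / ε ^ 2) ∧
        (ZU ε).toReal ≤ Real.exp (δ / ε ^ 2) * (ZV ε).toReal
          + Real.exp ((M + C - δ / ε) / ε ^ 2) := by
    filter_upwards [hC, Ioo_mem_nhdsGT (zero_lt_one' ℝ)] with ε hε hε1
    have hpos : 0 < ε := hε1.1
    have h2 : (0 : ℝ) < ε ^ 2 := by positivity
    haveI := hprob ε hpos
    have hUm : Measurable (fun y => φ y + Fs 0 y) := (hφcont.measurable).add (hmeasFs 0)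
    have hFem : Measurable (Fe ε) := by
      have : Fe ε = fun y => (∑ i ∈ Finset.range n, ε ^ i / (Nat.factorial i) * Fs i y)
          + ε ^ n * R ε y := funext (hexp ε hpos)
      rw [this]
      exact (Finset.measurable_fun_sum _ fun i _ => (hmeasFs i).const_mul _).add
        ((hmeasR ε).const_mul _)
    have hVm : Measurable (fun y => φ y + Fe ε y) := (hφcont.measurable).add hFem
    have hUb : ∀ y, |φ y + Fs 0 y| ≤ M + 2 * H ε y := fun y => by
      have := abs_add_le (φ y) (Fs 0 y)
      linarith [hM y, hF0H ε y, hH0 ε y]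
    have hVb : ∀ y, |φ y + Fe ε y| ≤ M + 2 * H ε y := fun y => by
      have a1 := abs_add_le (φ y + Fs 0 y) (Fe ε y - Fs 0 y)
      have a2 := abs_add_le (φ y) (Fs 0 y)
      have a3 := hdiff ε hpos hε1.2 y
      have a4 : ε * H ε y ≤ H ε y := mul_le_of_le_one_left (hH0 ε y) hε1.2.le
      have a5 : φ y + Fs 0 y + (Fe ε y - Fs 0 y) = φ y + Fe ε y := by ring
      rw [a5] at a1
      linarith [hM y, hF0H ε y]
    have hUV : ∀ y, |(φ y + Fs 0 y) - (φ y + Fe ε y)| ≤ ε * H ε y := fun y => by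
      rw [abs_sub_comm, add_sub_add_left_eq_sub]; exact hdiff ε hpos hε1.2 y
    have hVU : ∀ y, |(φ y + Fe ε y) - (φ y + Fs 0 y)| ≤ ε * H ε y := fun y => by
      rw [add_sub_add_left_eq_sub]; exact hdiff ε hpos hε1.2 y
    have fin : ∀ W : B → ℝ, (∀ y, |W y| ≤ M + 2 * H ε y) →
        ∫⁻ y, ENNReal.ofReal (Real.exp (-(W y) / ε ^ 2)) ∂(μ₀ ε) ≠ ⊤ := by
      intro W hW
      have := aux_upper_s8 (μ₀ ε) (fun y => -(W y)) (H ε) M C ε hpos (hH0 ε) (hHmeas ε)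
        (fun y => by simpa using hW y) hε
      exact ne_top_of_le_ne_top ENNReal.ofReal_ne_top this
    have low : ∀ W : B → ℝ, Measurable W → (∀ y, |W y| ≤ M + 2 * H ε y) →
        ENNReal.ofReal (Real.exp (-((M + C) / ε ^ 2))) ≤
        ∫⁻ y, ENNReal.ofReal (Real.exp (-(W y) / ε ^ 2)) ∂(μ₀ ε) := by
      intro W hWm hW
      have := aux_lower_s8 (μ₀ ε) (fun y => W y / ε ^ 2) (hWm.div_const _) ((M + C) / ε ^ 2)
        (aux_upper_s8 (μ₀ ε) W (H ε) M C ε hpos (hH0 ε) (hHmeas ε) hW hε)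
      simpa only [neg_div] using this
    have tU : ZU ε ≠ ⊤ := fin _ hUb
    have tV : ZV ε ≠ ⊤ := fin _ hVb
    have conv : ∀ (a b : ENNReal) (p q : ℝ), a ≠ ⊤ → b ≠ ⊤ → 0 ≤ p → 0 ≤ q →
        a ≤ ENNReal.ofReal p * b + ENNReal.ofReal q → a.toReal ≤ p * b.toReal + q := by
      intro a b p q ha hb hp hq hab
      have hmul : ENNReal.ofReal p * b ≠ ⊤ := ENNReal.mul_ne_top ENNReal.ofReal_ne_top hb
      have := ENNReal.toReal_mono (ENNReal.add_ne_top.2 ⟨hmul, ENNReal.ofReal_ne_top⟩) hab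
      rwa [ENNReal.toReal_add hmul ENNReal.ofReal_ne_top, ENNReal.toReal_mul,
        ENNReal.toReal_ofReal hp, ENNReal.toReal_ofReal hq] at this
    refine ⟨hpos, tU, tV, (ENNReal.ofReal_le_iff_le_toReal tU).1 (low _ hUm hUb),
      (ENNReal.ofReal_le_iff_le_toReal tV).1 (low _ hVm hVb), fun δ => ⟨?_, ?_⟩⟩
    · exact conv _ _ _ _ tV tU (Real.exp_pos _).le (Real.exp_pos _).le
        (aux_compare (μ₀ ε) _ _ (H ε) hUm (hHmeas ε) M C ε δ hpos hVb hUV hε)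
    · exact conv _ _ _ _ tU tV (Real.exp_pos _).le (Real.exp_pos _).le
        (aux_compare (μ₀ ε) _ _ (H ε) hVm (hHmeas ε) M C ε δ hpos hUb hVU hε)
  have hreal : Tendsto (fun ε : ℝ =>
      ε ^ 2 * (Real.log (ZV ε).toReal - Real.log (ZU ε).toReal)) (𝓝[>] (0 : ℝ)) (𝓝 0) := by
    rw [Metric.tendsto_nhds]
    intro η hη
    have hδ : 0 < η / 2 := by linarith
    have t1 : Tendsto (fun ε : ℝ => η / 2 / ε) (𝓝[>] (0 : ℝ)) atTop := by
      simp only [div_eq_mul_inv (η / 2)]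
      exact tendsto_inv_nhdsGT_zero.const_mul_atTop hδ
    have t2 : Tendsto (fun ε : ℝ => ε ^ 2) (𝓝[>] (0 : ℝ)) (𝓝 0) := by
      have : Tendsto (fun ε : ℝ => ε ^ 2) (𝓝 (0 : ℝ)) (𝓝 (0 ^ 2)) := (continuous_pow 2).tendsto 0
      simpa using this.mono_left nhdsWithin_le_nhds
    filter_upwards [key, t1.eventually_ge_atTop (2 * (M + C)), t2.eventually_lt_const hδ]
      with ε hk hs1 hs2
    obtain ⟨hpos, -, -, lU, lV, hc⟩ := hk
    have pU := lt_of_lt_of_le (Real.exp_pos _) lU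
    have pV := lt_of_lt_of_le (Real.exp_pos _) lV
    have r1 := aux_log_s8 _ _ M C ε (η / 2) hpos pV lU (hc _).1 hδ hs1 hs2
    have r2 := aux_log_s8 _ _ M C ε (η / 2) hpos pU lV (hc _).2 hδ hs1 hs2
    rw [Real.dist_eq, sub_zero, abs_lt]
    constructor <;> linarith
  have hcoe : Tendsto (fun ε : ℝ =>
      ((ε ^ 2 * (Real.log (ZV ε).toReal - Real.log (ZU ε).toReal) : ℝ) : EReal))
      (𝓝[>] (0 : ℝ)) (𝓝 (0 : EReal)) := by
    exact EReal.tendsto_coe.2 hreal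
  refine hcoe.congr' ?_
  filter_upwards [key] with ε hk
  obtain ⟨hpos, tU, tV, lU, lV, -⟩ := hk
  have pU := lt_of_lt_of_le (Real.exp_pos _) lU
  have pV := lt_of_lt_of_le (Real.exp_pos _) lV
  have nU : ZU ε ≠ 0 := fun h => by simp [h] at pU
  have nV : ZV ε ≠ 0 := fun h => by simp [h] at pV
  change _ = ((ε ^ 2 : ℝ) : EReal) * (ENNReal.log (ZV ε) - ENNReal.log (ZU ε))
  rw [ENNReal.log_pos_real nU tU, ENNReal.log_pos_real nV tV, ← EReal.coe_sub, ← EReal.coe_mul]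
end

section
/- Finite-dimensional version of the main theorem (Onsager–Machlup converges to Freidlin–Wentzell): Let γ be the standard Gaussian measure on E = EuclideanSpace ℝ (Fin d) and γ_ε the pushforward of γ under x ↦ εx. For ε > 0 let F^ε : E → ℝ admit the expansion F^ε(y) = F₀(y) + ε F₁(y) + ⋯ + (ε^{n−1}/(n−1)!) F_{n−1}(y) + εⁿ R_n(ε, y), where F₀ is continuous; lim_{ε→0⁺} R_n(ε, y) = 0 for every y; every point has a neighborhood on which all |F_i| and, for all small ε, |R_n(ε,·)| are bounded by a common constant; and for every 0 ≤ i ≤ n−1 and every γ' > 0, limsup_{ε→0⁺} ε² log ∫ exp(γ' max{|F_i(y)|, |R_n(ε,y)|}/ε²) dγ_ε(y) < ∞. Suppose Z_ε := ∫ exp(−F^ε(y)/ε²) dγ_ε(y) ∈ (0,∞), define μ^ε(A) = Z_ε^{−1} ∫_A exp(−F^ε(y)/ε²) dγ_ε(y), and assume (μ^ε) is exponentially tight. Set OM_ε(z) := (F^ε(z) + ‖z‖²/2)/ε² and FW(z) := F₀(z) + ‖z‖²/2 − inf_{w∈E} (F₀(w) + ‖w‖²/2). Then: (i) (μ^ε)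 satisfies the LDP with speed ε² and good rate function FW; (ii) for every z ∈ E, lim_{ε→0⁺} ε² OM_ε(z) = F₀(z) + ‖z‖²/2; and (iii) the functions ε² OM_ε Γ-converge to z ↦ F₀(z) + ‖z‖²/2 as ε → 0⁺. -/
open MeasureTheory Filter Metric Set Topology Real

/-- The Γ-lower limit at `z`, as `ε → 0⁺`. -/
noncomputable def GammaLiminf {X : Type*} [TopologicalSpace X]
    (G : ℝ → X → EReal) (z : X) : EReal :=
  ⨆ N ∈ 𝓝 z, Filter.liminf (fun ε : ℝ => ⨅ y ∈ N, G ε y) (𝓝[>] (0 : ℝ))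

/-- The Γ-upper limit at `z`, as `ε → 0⁺`. -/
noncomputable def GammaLimsup {X : Type*} [TopologicalSpace X]
    (G : ℝ → X → EReal) (z : X) : EReal :=
  ⨆ N ∈ 𝓝 z, Filter.limsup (fun ε : ℝ => ⨅ y ∈ N, G ε y) (𝓝[>] (0 : ℝ))

section helpers

variable {d : ℕ}

/-- unnormalised mass -/
noncomputable def auxM (Φe : ℝ → EuclideanSpace ℝ (Fin d) → ℝ) (ε : ℝ)
    (A : Set (EuclideanSpace ℝ (Fin d))) : ENNReal :=
  ∫⁻ y in A, ENNReal.ofReal (Real.exp (-Φe ε y / ε ^ 2))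

lemma aux_mul_log_le {ε : ℝ} (hε : 0 < ε) (x : ENNReal) (m : ℝ) :
    ((ε ^ 2 : ℝ) : EReal) * ENNReal.log x ≤ (m : EReal) ↔
      x ≤ ENNReal.ofReal (Real.exp (m / ε ^ 2)) := by
  have h2 : 0 < ε ^ 2 := by positivity
  rw [← ENNReal.log_le_log_iff, ENNReal.log_ofReal_of_pos (Real.exp_pos _), Real.log_exp]
  rw [EReal.coe_div, EReal.le_div_iff_mul_le (by exact_mod_cast h2) (EReal.coe_ne_top _), mul_comm]

lemma aux_le_mul_log {ε : ℝ} (hε : 0 < ε) (x : ENNReal) (m : ℝ) :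
    (m : EReal) ≤ ((ε ^ 2 : ℝ) : EReal) * ENNReal.log x ↔
      ENNReal.ofReal (Real.exp (m / ε ^ 2)) ≤ x := by
  have h2 : 0 < ε ^ 2 := by positivity
  rw [← ENNReal.log_le_log_iff, ENNReal.log_ofReal_of_pos (Real.exp_pos _), Real.log_exp]
  rw [EReal.coe_div, EReal.div_le_iff_le_mul (by exact_mod_cast h2) (EReal.coe_ne_top _)]

/-- constants are absorbed -/
lemma aux_absorb {C a b : ℝ} (hab : a < b) :
    ∀ᶠ ε : ℝ in 𝓝[>] (0 : ℝ), C * Real.exp (a / ε ^ 2) ≤ Real.exp (b / ε ^ 2) := by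
  have h1 : Tendsto (fun ε : ℝ => (b - a) * (ε ^ 2)⁻¹) (𝓝[>] (0 : ℝ)) atTop := by
    apply Tendsto.const_mul_atTop (sub_pos.2 hab)
    have := (tendsto_pow_atTop (two_ne_zero (α := ℕ))).comp (tendsto_inv_nhdsGT_zero (𝕜 := ℝ))
    refine this.congr fun x => ?_
    simp
  have h2 := (Real.tendsto_exp_atTop.comp h1).eventually_ge_atTop C
  filter_upwards [h2] with ε h
  have : b / ε ^ 2 = (b - a) * (ε ^ 2)⁻¹ + a / ε ^ 2 := by rw [div_eq_mul_inv, div_eq_mul_inv]; ring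
  rw [this, Real.exp_add]
  exact mul_le_mul_of_nonneg_right h (Real.exp_pos _).le

lemma aux_absorb' {C : ENNReal} (hC : C ≠ ⊤) {a b : ℝ} (hab : a < b) :
    ∀ᶠ ε : ℝ in 𝓝[>] (0 : ℝ), C * ENNReal.ofReal (Real.exp (a / ε ^ 2)) ≤
      ENNReal.ofReal (Real.exp (b / ε ^ 2)) := by
  filter_upwards [aux_absorb (C := C.toReal) hab] with ε h
  rw [← ENNReal.ofReal_toReal hC, ← ENNReal.ofReal_mul ENNReal.toReal_nonneg]
  exact ENNReal.ofReal_le_ofReal h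

variable {Φ : EuclideanSpace ℝ (Fin d) → ℝ} {Φe : ℝ → EuclideanSpace ℝ (Fin d) → ℝ}

lemma aux_LU
    (huc : ∀ K : Set (EuclideanSpace ℝ (Fin d)), IsCompact K → ∀ η : ℝ, 0 < η →
      ∀ᶠ ε : ℝ in 𝓝[>] (0 : ℝ), ∀ y ∈ K, |Φe ε y - Φ y| < η)
    {K : Set (EuclideanSpace ℝ (Fin d))} (hK : IsCompact K) {m₁ m : ℝ}
    (hm₁ : ∀ y ∈ K, m₁ ≤ Φ y) (hm : m < m₁) :
    ∀ᶠ ε : ℝ in 𝓝[>] (0 : ℝ), auxM Φe ε K ≤ ENNReal.ofReal (Real.exp (-m / ε ^ 2)) := by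
  have hab : -((m + m₁) / 2) < -m := by linarith
  filter_upwards [aux_absorb' (hK.measure_lt_top (μ := volume)).ne hab,
    huc K hK ((m₁ - m) / 2) (by linarith), self_mem_nhdsWithin] with ε h1 h2 hε
  have hε : 0 < ε := hε
  refine le_trans ?_ h1
  unfold auxM
  calc _ ≤ ∫⁻ y in K, ENNReal.ofReal (Real.exp (-((m + m₁) / 2) / ε ^ 2)) := by
        apply setLIntegral_mono' hK.measurableSet
        intro y hy
        apply ENNReal.ofReal_le_ofReal
        apply Real.exp_le_exp.2
        have := abs_lt.1 (h2 y hy)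
        have := hm₁ y hy
        gcongr
        linarith
    _ = _ := by rw [setLIntegral_const, mul_comm]

lemma aux_LL (hΦ : Continuous Φ)
    (huc : ∀ K : Set (EuclideanSpace ℝ (Fin d)), IsCompact K → ∀ η : ℝ, 0 < η →
      ∀ᶠ ε : ℝ in 𝓝[>] (0 : ℝ), ∀ y ∈ K, |Φe ε y - Φ y| < η)
    {G : Set (EuclideanSpace ℝ (Fin d))} (hG : IsOpen G) {z} (hz : z ∈ G) {m : ℝ}
    (hm : Φ z < m) :
    ∀ᶠ ε : ℝ in 𝓝[>] (0 : ℝ), ENNReal.ofReal (Real.exp (-m / ε ^ 2)) ≤ auxM Φe ε G := by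
  obtain ⟨η, hη, hηm⟩ : ∃ η, 0 < η ∧ Φ z + 2 * η < m := ⟨(m - Φ z) / 3, by linarith, by linarith⟩
  have hn : G ∩ {y | Φ y < Φ z + η} ∈ 𝓝 z :=
    inter_mem (hG.mem_nhds hz) (hΦ.continuousAt.eventually_lt_const (by linarith))
  obtain ⟨r, hr, hrs⟩ := Metric.nhds_basis_closedBall.mem_iff.1 hn
  have hv0 : volume (closedBall z r) ≠ 0 := (measure_closedBall_pos volume z hr).ne'
  have hvt : volume (closedBall z r) ≠ ⊤ := measure_closedBall_lt_top.ne
  have hab : -m < -(Φ z + 2 * η) := by linarith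
  filter_upwards [aux_absorb' (C := (volume (closedBall z r))⁻¹) (by simpa using hv0) hab,
    huc _ (isCompact_closedBall z r) η hη, self_mem_nhdsWithin] with ε h1 h2 hε
  have hε : 0 < ε := hε
  rw [ENNReal.inv_mul_le_iff hv0 hvt] at h1
  refine h1.trans ?_
  unfold auxM
  calc _ = ∫⁻ y in closedBall z r, ENNReal.ofReal (Real.exp (-(Φ z + 2 * η) / ε ^ 2)) := by
        rw [setLIntegral_const, mul_comm]
    _ ≤ ∫⁻ y in closedBall z r, ENNReal.ofReal (Real.exp (-Φe ε y / ε ^ 2)) := by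
        apply setLIntegral_mono' measurableSet_closedBall
        intro y hy
        apply ENNReal.ofReal_le_ofReal
        apply Real.exp_le_exp.2
        have := abs_lt.1 (h2 y hy)
        have : Φ y < Φ z + η := (hrs hy).2
        gcongr
        linarith
    _ ≤ _ := lintegral_mono_set fun y hy => (hrs hy).1

lemma aux_tight {μ : ℝ → Measure (EuclideanSpace ℝ (Fin d))} (ht : ExpTight μ) (α : ℝ) :
    ∃ K, IsCompact K ∧ ∀ᶠ ε : ℝ in 𝓝[>] (0 : ℝ),
      μ ε Kᶜ ≤ ENNReal.ofReal (Real.exp (-α / ε ^ 2)) := by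
  obtain ⟨K, hK, h⟩ := ht (|α| + 1) (by positivity)
  refine ⟨K, hK, ?_⟩
  have hlt : ((-(|α| + 1) : ℝ) : EReal) < ((-α : ℝ) : EReal) := by
    have := le_abs_self α
    exact_mod_cast (by linarith : -(|α| + 1) < -α)
  have := eventually_lt_of_limsup_lt (h.trans_lt hlt)
  filter_upwards [this, self_mem_nhdsWithin] with ε h1 hε
  exact (aux_mul_log_le hε _ _).1 h1.le

lemma aux_Z {μ : ℝ → Measure (EuclideanSpace ℝ (Fin d))} (ht : ExpTight μ)
    (hM : ∀ ε : ℝ, 0 < ε → auxM Φe ε univ ≠ 0 ∧ auxM Φe ε univ ≠ ⊤)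
    (hμ : ∀ ε : ℝ, 0 < ε → ∀ A, MeasurableSet A → μ ε A = auxM Φe ε A / auxM Φe ε univ) :
    ∃ K, IsCompact K ∧ ∀ᶠ ε : ℝ in 𝓝[>] (0 : ℝ), auxM Φe ε univ ≤ 2 * auxM Φe ε K := by
  obtain ⟨K, hK, h⟩ := aux_tight ht 1
  refine ⟨K, hK, ?_⟩
  have h2 := aux_absorb (C := 2) (by norm_num : (-1 : ℝ) < 0)
  filter_upwards [h, h2, self_mem_nhdsWithin] with ε h1 h2 hε
  have h3 : μ ε Kᶜ ≤ 2⁻¹ := by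
    refine h1.trans ?_
    rw [zero_div, Real.exp_zero] at h2
    rw [ENNReal.ofReal_le_iff_le_toReal (by simp)]
    simp only [ENNReal.toReal_inv, ENNReal.toReal_ofNat]
    linarith
  obtain ⟨h0, ht⟩ := hM ε hε
  rw [hμ ε hε _ hK.measurableSet.compl, ENNReal.div_le_iff h0 ht] at h3
  have h4 : auxM Φe ε univ = auxM Φe ε K + auxM Φe ε Kᶜ := by
    unfold auxM
    rw [lintegral_add_compl _ hK.measurableSet, setLIntegral_univ]
  have h5 : auxM Φe ε univ ≠ ⊤ := ht
  set Z := auxM Φe ε univ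
  have hKt : auxM Φe ε K ≠ ⊤ := fun h => by rw [h] at h4; simp at h4; exact ht h4
  have hKc : auxM Φe ε Kᶜ ≠ ⊤ := fun h => by rw [h] at h4; simp at h4; exact ht h4
  rw [← ENNReal.toReal_le_toReal ht (ENNReal.mul_ne_top (by simp) hKt)]
  have h6 := (ENNReal.toReal_le_toReal hKc (ENNReal.mul_ne_top (by simp) ht)).2 h3
  have h7 := congrArg ENNReal.toReal h4
  rw [ENNReal.toReal_add hKt hKc] at h7
  rw [ENNReal.toReal_mul] at h6 ⊢
  simp only [ENNReal.toReal_inv, ENNReal.toReal_ofNat] at h6 ⊢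
  linarith

lemma aux_bdd (hΦ : Continuous Φ)
    (huc : ∀ K : Set (EuclideanSpace ℝ (Fin d)), IsCompact K → ∀ η : ℝ, 0 < η →
      ∀ᶠ ε : ℝ in 𝓝[>] (0 : ℝ), ∀ y ∈ K, |Φe ε y - Φ y| < η)
    {K : Set (EuclideanSpace ℝ (Fin d))} (hK : IsCompact K)
    (h : ∀ᶠ ε : ℝ in 𝓝[>] (0 : ℝ), auxM Φe ε univ ≤ 2 * auxM Φe ε K) :
    BddBelow (range Φ) := by
  obtain ⟨m₀, hm₀⟩ := (hK.image hΦ).bddBelow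
  have hm₀' : ∀ y ∈ K, m₀ ≤ Φ y := fun y hy => hm₀ (mem_image_of_mem _ hy)
  refine ⟨m₀ - 3, ?_⟩
  rintro _ ⟨z, rfl⟩
  have e1 := aux_LU huc hK hm₀' (by linarith : m₀ - 1 < m₀)
  have e2 := aux_LL hΦ huc isOpen_univ (mem_univ z) (by linarith : Φ z < Φ z + 1)
  have e3 := aux_absorb' (C := 2) (by simp) (by linarith : -(m₀ - 1) < -(m₀ - 2))
  obtain ⟨ε, e1, e2, e3, h, hε⟩ := (e1.and (e2.and (e3.and (h.and self_mem_nhdsWithin)))).exists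
  have hε : 0 < ε := hε
  have := (e2.trans h).trans ((mul_le_mul_right e1 2).trans e3)
  rw [ENNReal.ofReal_le_ofReal_iff (Real.exp_pos _).le, Real.exp_le_exp,
    div_le_div_iff_of_pos_right (by positivity)] at this
  linarith

lemma aux_ZU
    (huc : ∀ K : Set (EuclideanSpace ℝ (Fin d)), IsCompact K → ∀ η : ℝ, 0 < η →
      ∀ᶠ ε : ℝ in 𝓝[>] (0 : ℝ), ∀ y ∈ K, |Φe ε y - Φ y| < η)
    {K : Set (EuclideanSpace ℝ (Fin d))} (hK : IsCompact K)
    (h : ∀ᶠ ε : ℝ in 𝓝[>] (0 : ℝ), auxM Φe ε univ ≤ 2 * auxM Φe ε K)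
    {I m : ℝ} (hI : ∀ y, I ≤ Φ y) (hm : m < I) :
    ∀ᶠ ε : ℝ in 𝓝[>] (0 : ℝ), auxM Φe ε univ ≤ ENNReal.ofReal (Real.exp (-m / ε ^ 2)) := by
  have e1 := aux_LU huc hK (fun y _ => hI y) (by linarith : (m + I) / 2 < I)
  have e3 := aux_absorb' (C := 2) (by simp) (by linarith : -((m + I) / 2) < -m)
  filter_upwards [e1, e3, h] with ε e1 e3 h
  exact h.trans ((mul_le_mul_right e1 2).trans e3)

lemma aux_ofReal_exp_mul (a b c ε : ℝ) (h : a + b = c) :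
    ENNReal.ofReal (Real.exp (a / ε ^ 2)) * ENNReal.ofReal (Real.exp (b / ε ^ 2)) =
      ENNReal.ofReal (Real.exp (c / ε ^ 2)) := by
  rw [← ENNReal.ofReal_mul (Real.exp_pos _).le, ← Real.exp_add, ← add_div, h]

lemma aux_LDP (hΦ : Continuous Φ)
    (huc : ∀ K : Set (EuclideanSpace ℝ (Fin d)), IsCompact K → ∀ η : ℝ, 0 < η →
      ∀ᶠ ε : ℝ in 𝓝[>] (0 : ℝ), ∀ y ∈ K, |Φe ε y - Φ y| < η)
    {μ : ℝ → Measure (EuclideanSpace ℝ (Fin d))} (ht : ExpTight μ)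
    (hM : ∀ ε : ℝ, 0 < ε → auxM Φe ε univ ≠ 0 ∧ auxM Φe ε univ ≠ ⊤)
    (hμ : ∀ ε : ℝ, 0 < ε → ∀ A, MeasurableSet A → μ ε A = auxM Φe ε A / auxM Φe ε univ)
    {FW : EuclideanSpace ℝ (Fin d) → EReal}
    (hFW : ∀ z, FW z = ((Φ z : ℝ) : EReal) -
      ⨅ w : EuclideanSpace ℝ (Fin d), ((Φ w : ℝ) : EReal)) : HasLDP μ FW := by
  obtain ⟨K₀, hK₀, hZK⟩ := aux_Z ht hM hμ
  have hbdd := aux_bdd hΦ huc hK₀ hZK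
  obtain ⟨I, hI⟩ : ∃ I : ℝ, IsGLB (range Φ) I := ⟨_, isGLB_ciInf hbdd⟩
  have hIle : ∀ y, I ≤ Φ y := fun y => hI.1 (mem_range_self y)
  have hIE : (⨅ w : EuclideanSpace ℝ (Fin d), ((Φ w : ℝ) : EReal)) = (I : EReal) := by
    apply le_antisymm
    · apply EReal.le_of_forall_lt_iff_le.1
      intro r hr
      obtain ⟨_, ⟨y, rfl⟩, hy⟩ := (isGLB_lt_iff hI).1 (EReal.coe_lt_coe_iff.1 hr)
      exact (iInf_le _ y).trans (by exact_mod_cast hy.le)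
    · exact le_iInf fun w => by exact_mod_cast hIle w
  have hFW' : ∀ z, FW z = ((Φ z - I : ℝ) : EReal) := fun z => by
    rw [hFW, hIE, EReal.coe_sub]
  have hcont : Continuous FW := by
    rw [funext hFW']
    exact continuous_coe_real_ereal.comp (hΦ.sub continuous_const)
  -- lower bound
  have hlow : ∀ G : Set (EuclideanSpace ℝ (Fin d)), IsOpen G → ∀ z ∈ G, ∀ m : ℝ, Φ z - I < m →
      ∀ᶠ ε : ℝ in 𝓝[>] (0 : ℝ), ENNReal.ofReal (Real.exp (-m / ε ^ 2)) ≤ μ ε G := by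
    intro G hG z hz m hm
    obtain ⟨η, hη, hηm⟩ : ∃ η, 0 < η ∧ Φ z + η = m + (I - η) :=
      ⟨(m - (Φ z - I)) / 2, by linarith, by linarith⟩
    filter_upwards [aux_LL hΦ huc hG hz (by linarith : Φ z < Φ z + η),
      aux_ZU huc hK₀ hZK hIle (by linarith : I - η < I), self_mem_nhdsWithin] with ε h1 h2 hε
    obtain ⟨h0, htop⟩ := hM ε hε
    rw [hμ ε hε _ hG.measurableSet, ENNReal.le_div_iff_mul_le (Or.inl h0) (Or.inl htop)]
    refine (mul_le_mul_right h2 _).trans ?_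
    rw [aux_ofReal_exp_mul _ _ (-(Φ z + η)) _ (by linarith)]
    exact h1
  refine ⟨?_, hcont.lowerSemicontinuous, ?_, ?_, ?_⟩
  · intro x
    rw [hFW']
    exact_mod_cast sub_nonneg.2 (hIle x)
  · intro c
    obtain ⟨K, hK, h⟩ := aux_tight ht (c + 2)
    refine hK.of_isClosed_subset (isClosed_le hcont continuous_const) ?_
    intro z hz
    by_contra hzK
    have hz : Φ z - I ≤ c := by
      have : FW z ≤ c := hz
      rw [hFW'] at this
      exact_mod_cast this
    obtain ⟨ε, h1, h2, hε⟩ := ((hlow Kᶜ hK.isClosed.isOpen_compl z hzK (c + 1) (by linarith)).and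
      (h.and self_mem_nhdsWithin)).exists
    have hε : 0 < ε := hε
    have := h1.trans h2
    rw [ENNReal.ofReal_le_ofReal_iff (Real.exp_pos _).le, Real.exp_le_exp,
      div_le_div_iff_of_pos_right (by positivity)] at this
    linarith
  · intro F hF
    rw [EReal.le_neg]
    apply EReal.ge_of_forall_gt_iff_ge.1
    intro m hm
    obtain ⟨m', hm1, hm2⟩ := EReal.lt_iff_exists_real_btwn.1 hm
    have hm1 : m < m' := by exact_mod_cast hm1
    have hm3 : ∀ y ∈ F, m' + I ≤ Φ y := by
      intro y hy
      have : (m' : EReal) ≤ FW y := hm2.le.trans (iInf₂_le y hy)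
      rw [hFW'] at this
      have : m' ≤ Φ y - I := by exact_mod_cast this
      linarith
    obtain ⟨η, hη, hηm⟩ : ∃ η, 0 < η ∧ m + 3 * η = m' :=
      ⟨(m' - m) / 3, by linarith, by linarith⟩
    obtain ⟨K, hK, h⟩ := aux_tight ht (m + η)
    rw [EReal.le_neg, ← EReal.coe_neg]
    apply limsup_le_of_le (by isBoundedDefault)
    have e1 := aux_LU huc (hK.inter_left hF) (fun y hy => hm3 y hy.1)
      (by linarith : m + I + 2 * η < m' + I)
    obtain ⟨_, ⟨z, rfl⟩, hz⟩ := (isGLB_lt_iff hI).1 (by linarith : I < I + η)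
    have e2 := aux_LL hΦ huc isOpen_univ (mem_univ z) hz
    have e3 := aux_absorb' (C := 2) (by simp) (by linarith : -(m + η) < -m)
    filter_upwards [e1, e2, e3, h, self_mem_nhdsWithin] with ε e1 e2 e3 h hε
    rw [aux_mul_log_le hε]
    refine le_trans ?_ e3
    have hsub : F ⊆ (F ∩ K) ∪ Kᶜ := fun y hy => by
      by_cases hyK : y ∈ K
      · exact Or.inl ⟨hy, hyK⟩
      · exact Or.inr hyK
    refine (measure_mono hsub).trans ((measure_union_le _ _).trans ?_)
    rw [two_mul]
    refine add_le_add ?_ h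
    rw [hμ ε hε _ (hF.measurableSet.inter hK.measurableSet)]
    apply ENNReal.div_le_of_le_mul
    refine e1.trans (le_trans ?_ (mul_le_mul_right e2 _))
    rw [aux_ofReal_exp_mul _ _ (-(m + I + 2 * η)) _ (by ring)]
  · intro G hG
    rw [EReal.neg_le]
    refine le_iInf₂ fun z hz => ?_
    rw [hFW']
    apply EReal.le_of_forall_lt_iff_le.1
    intro m hm
    rw [EReal.neg_le, ← EReal.coe_neg]
    apply le_liminf_of_le (by isBoundedDefault)
    filter_upwards [hlow G hG z hz m (by exact_mod_cast hm), self_mem_nhdsWithin] with ε h hε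
    rw [aux_le_mul_log hε]
    exact h

/-- integrals against the scaled Gaussian -/
lemma aux_scale {γ : Measure (EuclideanSpace ℝ (Fin d))}
    (hγ : γ = volume.withDensity
      (fun x => ENNReal.ofReal ((2 * π) ^ (-(d : ℝ) / 2) * Real.exp (-‖x‖ ^ 2 / 2))))
    {ε : ℝ} (hε : 0 < ε) :
    ∃ c : ENNReal, c ≠ 0 ∧ c ≠ ⊤ ∧ ∀ f : EuclideanSpace ℝ (Fin d) → ENNReal, Measurable f →
      ∫⁻ y, f y ∂(Measure.map (fun x => ε • x) γ) =
        c * ∫⁻ y, f y * ENNReal.ofReal (Real.exp (-(‖y‖ ^ 2 / 2) / ε ^ 2)) := by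
  have hp : 0 < (2 * π) ^ (-(d : ℝ) / 2) := Real.rpow_pos_of_pos (by positivity) _
  refine ⟨ENNReal.ofReal ((2 * π) ^ (-(d : ℝ) / 2)) * ENNReal.ofReal |(ε ^ d)⁻¹|, ?_, ?_, ?_⟩
  · refine mul_ne_zero ?_ ?_
    · simpa using hp
    · have : 0 < |(ε ^ d)⁻¹| := by positivity
      exact (ENNReal.ofReal_pos.2 this).ne'
  · exact ENNReal.mul_ne_top (by simp) (by simp)
  · intro f hf
    have hs : Measurable fun x : EuclideanSpace ℝ (Fin d) => ε • x := measurable_const_smul ε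
    have hg : Measurable fun y : EuclideanSpace ℝ (Fin d) =>
        f y * ENNReal.ofReal (Real.exp (-(‖y‖ ^ 2 / 2) / ε ^ 2)) := by fun_prop
    rw [lintegral_map hf hs, hγ, lintegral_withDensity_eq_lintegral_mul _ (by fun_prop)
      (show Measurable fun x => f (ε • x) from hf.comp hs), mul_assoc]
    have hmap := Measure.map_addHaar_smul
      (volume : Measure (EuclideanSpace ℝ (Fin d))) hε.ne'
    rw [finrank_euclideanSpace_fin] at hmap
    rw [← smul_eq_mul (ENNReal.ofReal |(ε ^ d)⁻¹|), ← lintegral_smul_measure, ← hmap,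
      lintegral_map hg hs, ← lintegral_const_mul _
        (show Measurable fun x : EuclideanSpace ℝ (Fin d) => f (ε • x) *
          ENNReal.ofReal (Real.exp (-(‖ε • x‖ ^ 2 / 2) / ε ^ 2)) from hg.comp hs)]
    apply lintegral_congr
    intro x
    simp only [Pi.mul_apply, Function.comp]
    rw [ENNReal.ofReal_mul hp.le, norm_smul, Real.norm_of_nonneg hε.le]
    have : -((ε * ‖x‖) ^ 2 / 2) / ε ^ 2 = -‖x‖ ^ 2 / 2 := by field_simp
    rw [this]
    ring

lemma aux_gamma (hΦ : Continuous Φ)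
    (huc : ∀ K : Set (EuclideanSpace ℝ (Fin d)), IsCompact K → ∀ η : ℝ, 0 < η →
      ∀ᶠ ε : ℝ in 𝓝[>] (0 : ℝ), ∀ y ∈ K, |Φe ε y - Φ y| < η)
    {G : ℝ → EuclideanSpace ℝ (Fin d) → EReal}
    (hG : ∀ ε : ℝ, 0 < ε → ∀ y, G ε y = ((Φe ε y : ℝ) : EReal)) (z) :
    GammaLiminf G z = ((Φ z : ℝ) : EReal) ∧ GammaLimsup G z = ((Φ z : ℝ) : EReal) := by
  have h1 : GammaLiminf G z ≤ GammaLimsup G z :=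
    iSup₂_mono fun N _ => liminf_le_limsup (by isBoundedDefault) (by isBoundedDefault)
  have h2 : GammaLimsup G z ≤ ((Φ z : ℝ) : EReal) := by
    refine iSup₂_le fun N hN => ?_
    apply EReal.le_of_forall_lt_iff_le.1
    intro m hm
    have hm : Φ z < m := by exact_mod_cast hm
    apply limsup_le_of_le (by isBoundedDefault)
    filter_upwards [huc {z} isCompact_singleton (m - Φ z) (by linarith), self_mem_nhdsWithin]
      with ε h hε
    refine (iInf₂_le z (mem_of_mem_nhds hN)).trans ?_
    rw [hG ε hε]
    have := abs_lt.1 (h z rfl)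
    exact_mod_cast (by linarith : Φe ε z ≤ m)
  have h3 : ((Φ z : ℝ) : EReal) ≤ GammaLiminf G z := by
    apply EReal.ge_of_forall_gt_iff_ge.1
    intro m hm
    have hm : m < Φ z := by exact_mod_cast hm
    obtain ⟨m', hm1, hm2⟩ := exists_between hm
    obtain ⟨r, hr, hrs⟩ := Metric.nhds_basis_closedBall.mem_iff.1
      (hΦ.continuousAt.eventually_const_lt hm2)
    refine le_trans ?_ (le_iSup₂ (closedBall z r) (closedBall_mem_nhds z hr))
    apply le_liminf_of_le (by isBoundedDefault)
    filter_upwards [huc _ (isCompact_closedBall z r) (m' - m) (by linarith),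
      self_mem_nhdsWithin] with ε h hε
    refine le_iInf₂ fun y hy => ?_
    rw [hG ε hε]
    have := abs_lt.1 (h y hy)
    have h5 : m' < Φ y := hrs hy
    exact_mod_cast (by linarith : m ≤ Φe ε y)
  exact ⟨le_antisymm (h1.trans h2) h3, le_antisymm h2 (h3.trans h1)⟩

lemma aux_huc (n : ℕ) (hn : 1 ≤ n)
    (Fs : ℕ → EuclideanSpace ℝ (Fin d) → ℝ) (R : ℝ → EuclideanSpace ℝ (Fin d) → ℝ)
    (Fe : ℝ → EuclideanSpace ℝ (Fin d) → ℝ)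
    (hexp : ∀ ε : ℝ, 0 < ε → ∀ y,
      Fe ε y = (∑ i ∈ Finset.range n, ε ^ i / (Nat.factorial i) * Fs i y) + ε ^ n * R ε y)
    (hbd : ∀ z, ∃ N ∈ 𝓝 z, ∃ C : ℝ, 0 < C ∧ ∃ ε₀ : ℝ, 0 < ε₀ ∧
      (∀ y ∈ N, ∀ i ≤ n - 1, |Fs i y| ≤ C) ∧
      (∀ y ∈ N, ∀ ε : ℝ, 0 < ε → ε < ε₀ → |R ε y| ≤ C))
    (K : Set (EuclideanSpace ℝ (Fin d))) (hK : IsCompact K) (η : ℝ) (hη : 0 < η) :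
    ∀ᶠ ε : ℝ in 𝓝[>] (0 : ℝ), ∀ y ∈ K, |Fe ε y - Fs 0 y| < η := by
  refine hK.induction_on (p := fun s => ∀ᶠ ε : ℝ in 𝓝[>] (0 : ℝ), ∀ y ∈ s, |Fe ε y - Fs 0 y| < η)
    ?_ ?_ ?_ ?_
  · simp
  · intro s t hst ht
    filter_upwards [ht] with ε h y hy using h y (hst hy)
  · intro s t hs ht
    filter_upwards [hs, ht] with ε h1 h2 y hy using hy.elim (h1 y) (h2 y)
  · intro z _
    obtain ⟨N, hN, C, hC, ε₀, hε₀, hb1, hb2⟩ := hbd z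
    refine ⟨N, mem_nhdsWithin_of_mem_nhds hN, ?_⟩
    obtain ⟨k, rfl⟩ : ∃ k, n = k + 1 := ⟨n - 1, by omega⟩
    have hpos : 0 < η / ((k + 1) * C) := by positivity
    filter_upwards [Ioo_mem_nhdsGT hε₀, Ioo_mem_nhdsGT one_pos, Ioo_mem_nhdsGT hpos]
      with ε h1 h2 h3 y hy
    have hε : 0 < ε := h1.1
    have hpow : ∀ i : ℕ, ε ^ (i + 1) ≤ ε := fun i => by
      simpa using pow_le_pow_of_le_one hε.le h2.2.le (by omega : 1 ≤ i + 1)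
    have hsum : |∑ i ∈ Finset.range k, ε ^ (i + 1) / (Nat.factorial (i + 1)) * Fs (i + 1) y|
        ≤ k * (ε * C) := by
      refine (Finset.abs_sum_le_sum_abs _ _).trans ?_
      refine (Finset.sum_le_card_nsmul _ _ (ε * C) ?_).trans (by simp)
      intro i hi
      have hi := Finset.mem_range.1 hi
      rw [abs_mul]
      have hf : (1 : ℝ) ≤ Nat.factorial (i + 1) := by
        exact_mod_cast Nat.succ_le_of_lt (Nat.factorial_pos _)
      have : |ε ^ (i + 1) / (Nat.factorial (i + 1) : ℝ)| ≤ ε := by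
        rw [abs_of_nonneg (by positivity)]
        exact (div_le_self (by positivity) hf).trans (hpow i)
      exact mul_le_mul this (hb1 y hy _ (by omega)) (abs_nonneg _) hε.le
    have hRb : |ε ^ (k + 1) * R ε y| ≤ ε * C := by
      rw [abs_mul, abs_of_nonneg (by positivity : 0 ≤ ε ^ (k + 1))]
      exact mul_le_mul (hpow k) (hb2 y hy ε hε h1.2) (abs_nonneg _) hε.le
    have heq : Fe ε y - Fs 0 y =
        (∑ i ∈ Finset.range k, ε ^ (i + 1) / (Nat.factorial (i + 1)) * Fs (i + 1) y) +
          ε ^ (k + 1) * R ε y := by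
      rw [hexp ε hε, Finset.sum_range_succ']
      simp
      ring
    rw [heq]
    refine (abs_add_le _ _).trans_lt ?_
    have h4 := (lt_div_iff₀ (by positivity)).1 h3.2
    nlinarith

end helpers

/-- **Finite-dimensional main theorem: Onsager–Machlup converges to Freidlin–Wentzell.**
For tilted scalings of the standard Gaussian on `ℝ^d`, the family `(μ ε)` satisfies an LDP
with good rate function `FW`, and the rescaled Onsager–Machlup functions
`ε² OM_ε = Fε + ‖·‖²/2` converge to `F₀ + ‖·‖²/2` both pointwise and in the Γ-sense. -/
theorem onsager_machlup_to_freidlin_wentzell (d : ℕ)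
    (γ : Measure (EuclideanSpace ℝ (Fin d)))
    (hγ : γ = volume.withDensity
      (fun x => ENNReal.ofReal ((2 * π) ^ (-(d : ℝ) / 2) * Real.exp (-‖x‖ ^ 2 / 2))))
    (γε : ℝ → Measure (EuclideanSpace ℝ (Fin d)))
    (hγε : ∀ ε : ℝ, γε ε = Measure.map (fun x => ε • x) γ)
    (n : ℕ) (hn : 1 ≤ n)
    (Fs : ℕ → EuclideanSpace ℝ (Fin d) → ℝ) (R : ℝ → EuclideanSpace ℝ (Fin d) → ℝ)
    (Fe : ℝ → EuclideanSpace ℝ (Fin d) → ℝ)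
    (hmeasFs : ∀ i, Measurable (Fs i)) (hmeasR : ∀ ε, Measurable (R ε))
    (hexp : ∀ ε : ℝ, 0 < ε → ∀ y,
      Fe ε y = (∑ i ∈ Finset.range n, ε ^ i / (Nat.factorial i) * Fs i y) + ε ^ n * R ε y)
    (hF₀ : Continuous (Fs 0))
    (hR : ∀ y, Tendsto (fun ε : ℝ => R ε y) (𝓝[>] (0 : ℝ)) (𝓝 0))
    (hbd : ∀ z, ∃ N ∈ 𝓝 z, ∃ C : ℝ, 0 < C ∧ ∃ ε₀ : ℝ, 0 < ε₀ ∧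
      (∀ y ∈ N, ∀ i ≤ n - 1, |Fs i y| ≤ C) ∧
      (∀ y ∈ N, ∀ ε : ℝ, 0 < ε → ε < ε₀ → |R ε y| ≤ C))
    (hmom : ∀ i < n, ∀ γ' : ℝ, 0 < γ' →
      Filter.limsup (fun ε : ℝ => ((ε ^ 2 : ℝ) : EReal) *
          ENNReal.log (∫⁻ y, ENNReal.ofReal
            (Real.exp (γ' * max |Fs i y| |R ε y| / ε ^ 2)) ∂(γε ε)))
        (𝓝[>] (0 : ℝ)) < (⊤ : EReal))
    (hZ : ∀ ε : ℝ, 0 < ε →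
      0 < ∫⁻ y, ENNReal.ofReal (Real.exp (-Fe ε y / ε ^ 2)) ∂(γε ε) ∧
      ∫⁻ y, ENNReal.ofReal (Real.exp (-Fe ε y / ε ^ 2)) ∂(γε ε) < ⊤)
    (μ : ℝ → Measure (EuclideanSpace ℝ (Fin d)))
    (hμ : ∀ ε : ℝ, 0 < ε → ∀ A, MeasurableSet A →
      μ ε A = (∫⁻ y in A, ENNReal.ofReal (Real.exp (-Fe ε y / ε ^ 2)) ∂(γε ε)) /
        (∫⁻ y, ENNReal.ofReal (Real.exp (-Fe ε y / ε ^ 2)) ∂(γε ε)))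
    (htight : ExpTight μ)
    (OMε : ℝ → EuclideanSpace ℝ (Fin d) → ℝ)
    (hOM : ∀ ε : ℝ, 0 < ε → ∀ z, OMε ε z = (Fe ε z + ‖z‖ ^ 2 / 2) / ε ^ 2)
    (FW : EuclideanSpace ℝ (Fin d) → EReal)
    (hFW : ∀ z, FW z = ((Fs 0 z + ‖z‖ ^ 2 / 2 : ℝ) : EReal) -
      ⨅ w : EuclideanSpace ℝ (Fin d), ((Fs 0 w + ‖w‖ ^ 2 / 2 : ℝ) : EReal)) :
    HasLDP μ FW ∧
    (∀ z, Tendsto (fun ε : ℝ => ε ^ 2 * OMε ε z) (𝓝[>] (0 : ℝ))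
      (𝓝 (Fs 0 z + ‖z‖ ^ 2 / 2))) ∧
    (∀ z,
      GammaLiminf (fun ε y => ((ε ^ 2 * OMε ε y : ℝ) : EReal)) z =
        ((Fs 0 z + ‖z‖ ^ 2 / 2 : ℝ) : EReal) ∧
      GammaLimsup (fun ε y => ((ε ^ 2 * OMε ε y : ℝ) : EReal)) z =
        ((Fs 0 z + ‖z‖ ^ 2 / 2 : ℝ) : EReal)) := by
  set Φ : EuclideanSpace ℝ (Fin d) → ℝ := fun z => Fs 0 z + ‖z‖ ^ 2 / 2 with hΦdef
  set Φe : ℝ → EuclideanSpace ℝ (Fin d) → ℝ := fun ε z => Fe ε z + ‖z‖ ^ 2 / 2 with hΦedef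
  have hΦ : Continuous Φ := by
    rw [hΦdef]
    fun_prop
  have huc : ∀ K : Set (EuclideanSpace ℝ (Fin d)), IsCompact K → ∀ η : ℝ, 0 < η →
      ∀ᶠ ε : ℝ in 𝓝[>] (0 : ℝ), ∀ y ∈ K, |Φe ε y - Φ y| < η := by
    intro K hK η hη
    filter_upwards [aux_huc n hn Fs R Fe hexp hbd K hK η hη] with ε h y hy
    simpa [hΦdef, hΦedef] using h y hy
  have hOM' : ∀ ε : ℝ, 0 < ε → ∀ y, ε ^ 2 * OMε ε y = Φe ε y := by
    intro ε hε y
    rw [hOM ε hε]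
    simp only [hΦedef]
    field_simp
  have hFem : ∀ ε : ℝ, 0 < ε → Measurable (Fe ε) := by
    intro ε hε
    rw [funext (hexp ε hε)]
    have := hmeasR ε
    fun_prop
  have key : ∀ ε : ℝ, 0 < ε → ∃ c : ENNReal, c ≠ 0 ∧ c ≠ ⊤ ∧ ∀ A, MeasurableSet A →
      ∫⁻ y in A, ENNReal.ofReal (Real.exp (-Fe ε y / ε ^ 2)) ∂(γε ε) = c * auxM Φe ε A := by
    intro ε hε
    obtain ⟨c, hc0, hct, hc⟩ := aux_scale hγ hε
    refine ⟨c, hc0, hct, fun A hA => ?_⟩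
    have hm : Measurable fun y => ENNReal.ofReal (Real.exp (-Fe ε y / ε ^ 2)) := by
      have := hFem ε hε
      fun_prop
    unfold auxM
    rw [hγε, ← lintegral_indicator hA, hc _ (hm.indicator hA), ← lintegral_indicator hA]
    congr 1
    apply lintegral_congr
    intro y
    by_cases hy : y ∈ A
    · simp only [indicator_of_mem hy]
      rw [← ENNReal.ofReal_mul (Real.exp_pos _).le, ← Real.exp_add, ← add_div]
      simp only [hΦedef]
      congr 3
      ring
    · simp [indicator_of_notMem hy]
  have hM : ∀ ε : ℝ, 0 < ε → auxM Φe ε univ ≠ 0 ∧ auxM Φe ε univ ≠ ⊤ := by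
    intro ε hε
    obtain ⟨c, hc0, hct, hc⟩ := key ε hε
    have hz := hZ ε hε
    rw [← setLIntegral_univ, hc univ MeasurableSet.univ] at hz
    constructor
    · intro h
      rw [h] at hz
      simp at hz
    · intro h
      rw [h, ENNReal.mul_top hc0] at hz
      simp at hz
  have hμ' : ∀ ε : ℝ, 0 < ε → ∀ A, MeasurableSet A →
      μ ε A = auxM Φe ε A / auxM Φe ε univ := by
    intro ε hε A hA
    obtain ⟨c, hc0, hct, hc⟩ := key ε hε
    rw [hμ ε hε A hA, hc A hA, ← setLIntegral_univ, hc univ MeasurableSet.univ,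
      ENNReal.mul_div_mul_left _ _ hc0 hct]
  refine ⟨aux_LDP hΦ huc htight hM hμ' hFW, ?_, ?_⟩
  · intro z
    rw [Metric.tendsto_nhds]
    intro η hη
    filter_upwards [huc {z} isCompact_singleton η hη, self_mem_nhdsWithin] with ε h hε
    rw [hOM' ε hε, Real.dist_eq]
    exact h z rfl
  · intro z
    exact aux_gamma (Φ := Φ) (Φe := Φe) hΦ huc (fun ε hε y => by rw [hOM' ε hε]) z
end

section
/- Convergence of Onsager–Machlup minimizers to Freidlin–Wentzell minimizers (finite-dimensional case): In the setting of the finite-dimensional main theorem — γ the standard Gaussian on E = EuclideanSpace ℝ (Fin d), F^ε(y) = F₀(y) + ε F₁(y) + ⋯ + εⁿ R_n(ε, y) with F₀ continuous, lim_{ε→0⁺} R_n(ε, y) = 0 pointwise, and every point having a neighborhood on which all |F_i| and, for all small ε, |R_n(ε,·)| are bounded by a common constant — suppose (ε_k) is a sequence of positive reals tending to 0, and for each k the point z_k ∈ E minimizes the function z ↦ F^{ε_k}(z) + ‖z‖²/2 over E. If z_k → z* in E, then z* minimizes z ↦ F₀(z) + ‖z‖²/2 over E. -/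
open MeasureTheory Filter Metric Set Topology

/-- **Convergence of Onsager–Machlup minimizers to Freidlin–Wentzell minimizers (finite
dimensions).** If `Fε = F₀ + ε F₁ + ⋯ + εⁿ Rₙ(ε,·)` with `F₀` continuous, `Rₙ(ε,y) → 0`
pointwise and local uniform boundedness of the coefficients, `ε_k → 0⁺`, `z_k` minimizes
`F^{ε_k} + ‖·‖²/2` and `z_k → z*`, then `z*` minimizes `F₀ + ‖·‖²/2`. -/
theorem om_minimizers_converge_to_fw_minimizer (d : ℕ)
    (n : ℕ) (hn : 1 ≤ n)
    (Fs : ℕ → EuclideanSpace ℝ (Fin d) → ℝ) (R : ℝ → EuclideanSpace ℝ (Fin d) → ℝ)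
    (Fe : ℝ → EuclideanSpace ℝ (Fin d) → ℝ)
    (hexp : ∀ ε : ℝ, 0 < ε → ∀ y,
      Fe ε y = (∑ i ∈ Finset.range n, ε ^ i / (Nat.factorial i) * Fs i y) + ε ^ n * R ε y)
    (hF₀ : Continuous (Fs 0))
    (hR : ∀ y, Tendsto (fun ε : ℝ => R ε y) (𝓝[>] (0 : ℝ)) (𝓝 0))
    (hbd : ∀ z, ∃ N ∈ 𝓝 z, ∃ C : ℝ, 0 < C ∧ ∃ ε₀ : ℝ, 0 < ε₀ ∧
      (∀ y ∈ N, ∀ i ≤ n - 1, |Fs i y| ≤ C) ∧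
      (∀ y ∈ N, ∀ ε : ℝ, 0 < ε → ε < ε₀ → |R ε y| ≤ C))
    (εs : ℕ → ℝ) (hεpos : ∀ k, 0 < εs k) (hεlim : Tendsto εs atTop (𝓝 0))
    (zs : ℕ → EuclideanSpace ℝ (Fin d))
    (hmin : ∀ k, ∀ w : EuclideanSpace ℝ (Fin d),
      Fe (εs k) (zs k) + ‖zs k‖ ^ 2 / 2 ≤ Fe (εs k) w + ‖w‖ ^ 2 / 2)
    (zstar : EuclideanSpace ℝ (Fin d)) (hconv : Tendsto zs atTop (𝓝 zstar)) :
    ∀ w : EuclideanSpace ℝ (Fin d),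
      Fs 0 zstar + ‖zstar‖ ^ 2 / 2 ≤ Fs 0 w + ‖w‖ ^ 2 / 2 := by
  obtain ⟨m, rfl⟩ : ∃ m, n = m + 1 := ⟨n - 1, by omega⟩
  have key : ∀ (ys : ℕ → EuclideanSpace ℝ (Fin d)) (y : EuclideanSpace ℝ (Fin d)),
      Tendsto ys atTop (𝓝 y) → Tendsto (fun k => Fe (εs k) (ys k)) atTop (𝓝 (Fs 0 y)) := by
    intro ys y hy
    obtain ⟨N, hN, C, hC, ε₀, hε₀, hF, hRb⟩ := hbd y
    have hyN : ∀ᶠ k in atTop, ys k ∈ N := hy hN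
    have hεs : ∀ᶠ k in atTop, εs k < ε₀ := hεlim.eventually_lt_const hε₀
    have hmul : ∀ a b : ℕ → ℝ, Tendsto a atTop (𝓝 0) → (∀ᶠ k in atTop, |b k| ≤ C) →
        Tendsto (fun k => a k * b k) atTop (𝓝 0) := by
      intro a b ha hb
      have := bdd_le_mul_tendsto_zero' C hb ha
      simpa only [mul_comm] using this
    have hpow : ∀ j : ℕ, Tendsto (fun k => εs k ^ (j + 1)) atTop (𝓝 0) := by
      intro j
      simpa using hεlim.pow (j + 1)
    have h1 : Tendsto (fun k => ∑ i ∈ Finset.range m,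
        εs k ^ (i + 1) / (Nat.factorial (i + 1)) * Fs (i + 1) (ys k)) atTop (𝓝 0) := by
      have := tendsto_finsetSum (Finset.range m) (f := fun i k =>
        εs k ^ (i + 1) / (Nat.factorial (i + 1) : ℝ) * Fs (i + 1) (ys k)) (a := fun _ => (0 : ℝ))
        (x := atTop) (fun i hi => by
          refine hmul _ _ ?_ ?_
          · simpa using (hpow i).div_const (Nat.factorial (i + 1) : ℝ)
          · filter_upwards [hyN] with k hk
            exact hF _ hk _ (by have := Finset.mem_range.1 hi; omega))
      simpa using this
    have h2 : Tendsto (fun k => εs k ^ (m + 1) * R (εs k) (ys k)) atTop (𝓝 0) := by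
      refine hmul _ _ (hpow m) ?_
      filter_upwards [hyN, hεs] with k hk hk'
      exact hRb _ hk _ (hεpos k) hk'
    have h0 : Tendsto (fun k => Fs 0 (ys k)) atTop (𝓝 (Fs 0 y)) := (hF₀.tendsto y).comp hy
    have h3 := (h1.add h0).add h2
    simp only [zero_add, add_zero] at h3
    refine h3.congr fun k => ?_
    rw [hexp _ (hεpos k), Finset.sum_range_succ']
    simp
  intro w
  have hl := (key zs zstar hconv).add ((hconv.norm.pow 2).div_const 2)
  have hr := (key (fun _ => w) w tendsto_const_nhds).add_const (‖w‖ ^ 2 / 2)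
  exact le_of_tendsto_of_tendsto' hl hr fun k => hmin k w
end
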